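/- Let k be a positive integer, let ℓ = (2k+3)·(2k+6), and let N = 2^{2((k+1)·log₂ℓ + ℓ·log₂(k+2))} + 2. Then every graph G in obs_{≤si}(C_k) has at most N^{k+1} vertices and at most (k+1)·N^{k+1} edges; in particular, every vertex of G has degree at most 2(k+1). -/

import Mathlib

/-- A finite undirected multigraph without loops. -/
structure Multigraph where
  V : Type
  E : Type
  finV : Finite V
  finE : Finite E
  ends : E → V × V
  loopless : ∀ e, (ends e).1 ≠ (ends e).2

attribute [instance] Multigraph.finV Multigraph.finE

namespace Multigraph

/-- `δ_G(S)`: the number of edges of `G` with exactly one endpoint in `S`. -/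
noncomputable def delta (G : Multigraph) (S : Set G.V) : ℕ :=
  {e : G.E | ¬ ((G.ends e).1 ∈ S ↔ (G.ends e).2 ∈ S)}.ncard

/-- The width `cw_σ(G)` of an ordering, represented as an injective ranking `ρ : V → ℕ`. -/
noncomputable def cwOrd (G : Multigraph) (ρ : G.V → ℕ) : ℕ :=
  sSup {w | ∃ v : G.V, w = G.delta {u | ρ u ≤ ρ v}}

/-- The cutwidth of a multigraph. -/
noncomputable def cutwidth (G : Multigraph) : ℕ :=
  sInf {w | ∃ ρ : G.V → ℕ, Function.Injective ρ ∧ G.cwOrd ρ = w}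

/-- Walks in a multigraph. -/
inductive Walk (G : Multigraph) : G.V → G.V → Type
  | nil (v : G.V) : Walk G v v
  | cons {u v w : G.V} (e : G.E)
      (h : G.ends e = (u, v) ∨ G.ends e = (v, u)) (p : Walk G v w) : Walk G u w

namespace Walk

def edges {G : Multigraph} : ∀ {u v : G.V}, G.Walk u v → List G.E
  | _, _, .nil _ => []
  | _, _, .cons e _ p => e :: p.edges

def support {G : Multigraph} : ∀ {u v : G.V}, G.Walk u v → List G.V
  | _, _, .nil v => [v]
  | u, _, .cons _ _ p => u :: p.support

end Walk

def Connected (G : Multigraph) : Prop := ∀ u v : G.V, Nonempty (G.Walk u v)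

/-- An immersion model of `H` in `G`. -/
structure ImmersionModel (H G : Multigraph) where
  vmap : H.V → G.V
  inj : Function.Injective vmap
  emap : (e : H.E) → G.Walk (vmap (H.ends e).1) (vmap (H.ends e).2)
  isPath : ∀ e, ((emap e).support).Nodup
  edgeDisj : ∀ e e', e ≠ e' → ∀ f, f ∈ (emap e).edges → f ∉ (emap e').edges

/-- `H ≤_i G`. -/
def Immersion (H G : Multigraph) : Prop := Nonempty (ImmersionModel H G)

/-- A strong immersion model: no internal vertex of a path is a branch vertex. -/
structure StrongImmersionModel (H G : Multigraph) extends ImmersionModel H G where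
  strong : ∀ e, ∀ x, x ∈ (emap e).support →
    x ≠ vmap (H.ends e).1 → x ≠ vmap (H.ends e).2 → x ∉ Set.range vmap

/-- `H ≤_si G`. -/
def StrongImmersion (H G : Multigraph) : Prop := Nonempty (StrongImmersionModel H G)

/-- Isomorphism of multigraphs. -/
structure Iso (G H : Multigraph) where
  fv : G.V ≃ H.V
  fe : G.E ≃ H.E
  pres : ∀ e, H.ends (fe e) = (fv (G.ends e).1, fv (G.ends e).2)
           ∨ H.ends (fe e) = (fv (G.ends e).2, fv (G.ends e).1)

def Isomorphic (G H : Multigraph) : Prop := Nonempty (Iso G H)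

/-- The minimal obstruction set of a class `C` with respect to a partial order `le`. -/
def obstructions (le : Multigraph → Multigraph → Prop) (C : Set Multigraph) :
    Set Multigraph :=
  {G | G ∉ C ∧ ∀ G', le G' G → ¬ G'.Isomorphic G → G' ∈ C}

/-- `C_k`: the class of multigraphs of cutwidth at most `k`. -/
def cutwidthClass (k : ℕ) : Set Multigraph := {G | G.cutwidth ≤ k}

/-- The degree of a vertex (each parallel edge counts once at each endpoint). -/
noncomputable def degree (G : Multigraph) (v : G.V) : ℕ :=
  {e : G.E | (G.ends e).1 = v ∨ (G.ends e).2 = v}.ncard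

/-- The number of `A`-blocks of an ordering `ρ`: the number of maximal runs of
consecutive (in `ρ`) vertices belonging to `A`, counted via block-starting vertices. -/
noncomputable def blockCount (G : Multigraph) (ρ : G.V → ℕ) (A : Set G.V) : ℕ :=
  {v : G.V | v ∈ A ∧ ∀ u : G.V, ρ u < ρ v →
      ∃ w : G.V, w ∉ A ∧ ρ u ≤ ρ w ∧ ρ w < ρ v}.ncard

/-- The extension `G*` of a `k`-boundaried graph `(G, x)`. -/
def extension (G : Multigraph) {k : ℕ} (x : Fin k → G.V) : Multigraph where
  V := G.V ⊕ Fin k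
  E := G.E ⊕ Fin k
  finV := inferInstance
  finE := inferInstance
  ends := Sum.elim (fun e => (Sum.inl (G.ends e).1, Sum.inl (G.ends e).2))
                   (fun i => (Sum.inl (x i), Sum.inr i))
  loopless := by
    rintro (e | i)
    · simpa using G.loopless e
    · simp

/-- The join `𝐀 ⊕ 𝐁` of two `k`-boundaried graphs. -/
def join {k : ℕ} (A B : Multigraph) (x : Fin k → A.V) (y : Fin k → B.V) : Multigraph where
  V := A.V ⊕ B.V
  E := (A.E ⊕ B.E) ⊕ Fin k
  finV := inferInstance
  finE := inferInstance
  ends := Sum.elim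
    (Sum.elim (fun e => (Sum.inl (A.ends e).1, Sum.inl (A.ends e).2))
              (fun e => (Sum.inr (B.ends e).1, Sum.inr (B.ends e).2)))
    (fun i => (Sum.inl (x i), Sum.inr (y i)))
  loopless := by
    rintro ((e | e) | i)
    · simpa using A.loopless e
    · simpa using B.loopless e
    · simp

/-- An `ℓ`-bucketing of an ordering `ρ` (buckets indexed 1,…,ℓ). -/
def IsBucketing (G : Multigraph) (ρ : G.V → ℕ) (ℓ : ℕ) (T : G.V → ℕ) : Prop :=
  (∀ v, 1 ≤ T v ∧ T v ≤ ℓ) ∧ ∀ u v : G.V, ρ u ≤ ρ v → T u ≤ T v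

/-- `width(G,σ,T,i)`: the maximum size of a cut in `cuts(G,σ,T,i)`; these cuts
are described by their left side `S`, which contains all buckets before `i`,
a `σ`-downward-closed part of bucket `i`, and nothing else. -/
noncomputable def bucketWidth (G : Multigraph) (ρ : G.V → ℕ) (T : G.V → ℕ) (i : ℕ) : ℕ :=
  sSup {w | ∃ S : Set G.V,
    (∀ v, T v < i → v ∈ S) ∧ (∀ v ∈ S, T v ≤ i) ∧
    (∀ u v : G.V, T u = i → T v = i → ρ u ≤ ρ v → v ∈ S → u ∈ S) ∧
    w = G.delta S}

/-- A `(k,ℓ)`-bucket interface. -/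
structure BucketInterface (k ℓ : ℕ) where
  b : Fin k → ℕ
  b' : Fin k → ℕ
  mu : ℕ → ℕ
  mu' : ℕ → ℕ
  b_mem : ∀ i, b i ∈ Set.Icc 1 ℓ
  b'_mem : ∀ i, b' i ∈ Set.Icc 1 ℓ
  mu_le : ∀ j, mu j ≤ k
  mu'_le : ∀ j, mu' j ≤ k

/-- A `k`-boundaried graph `(G, x)` conforms with a `(k,ℓ)`-bucket interface. -/
def Conforms {k : ℕ} (G : Multigraph) (x : Fin k → G.V) (ℓ : ℕ)
    (I : BucketInterface k ℓ) : Prop :=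
  ∃ ρ : (G.extension x).V → ℕ, Function.Injective ρ ∧
  ∃ T : (G.extension x).V → ℕ, (G.extension x).IsBucketing ρ ℓ T ∧
    (∀ v : G.V, Odd (T (Sum.inl v))) ∧
    (∀ i : Fin k, Even (T (Sum.inr i))) ∧
    (∀ i : Fin k, T (Sum.inl (x i)) = I.b i) ∧
    (∀ i : Fin k, T (Sum.inr i) = I.b' i) ∧
    (∀ j ∈ Set.Icc 1 ℓ,
      G.bucketWidth (fun v => ρ (Sum.inl v)) (fun v => T (Sum.inl v)) j ≤ I.mu j) ∧
    (∀ j ∈ Set.Icc 1 ℓ, (G.extension x).bucketWidth ρ T j ≤ I.mu' j)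

/-- `m` pairwise edge-disjoint paths between the sets `X` and `Y`. -/
def ConnectorBetween (G : Multigraph) (X Y : Set G.V) (m : ℕ) : Prop :=
  ∃ (s t : Fin m → G.V) (P : (i : Fin m) → G.Walk (s i) (t i)),
    (∀ i, s i ∈ X) ∧ (∀ i, t i ∈ Y) ∧ (∀ i, (P i).support.Nodup) ∧
    ∀ i j, i ≠ j → ∀ f, f ∈ (P i).edges → f ∉ (P j).edges

/-- A linked ordering. -/
def Linked (G : Multigraph) (ρ : G.V → ℕ) : Prop :=
  ∀ u u' : G.V, ρ u ≤ ρ u' →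
    G.ConnectorBetween {z | ρ z ≤ ρ u} {z | ¬ ρ z ≤ ρ u'}
      (sInf {w | ∃ v : G.V, ρ u ≤ ρ v ∧ ρ v ≤ ρ u' ∧ w = G.delta {z | ρ z ≤ ρ v}})

/-- The multigraph obtained by deleting a set of edges. -/
def deleteEdges (G : Multigraph) (F : Set G.E) : Multigraph where
  V := G.V
  E := {e : G.E // e ∉ F}
  finV := G.finV
  finE := inferInstance
  ends e := G.ends e.1
  loopless e := G.loopless e.1

/-- `dcw_k(G)`: minimum number of edges to delete to reach cutwidth at most `k`. -/
noncomputable def dcw (k : ℕ) (G : Multigraph) : ℕ :=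
  sInf {w | ∃ F : Set G.E, (G.deleteEdges F).cutwidth ≤ k ∧ F.ncard = w}

/-- The class `C_{w,k}`. -/
def dcwClass (w k : ℕ) : Set Multigraph := {G | dcw k G ≤ w}

/-- Induced subgraph `G[X]`. -/
def induce (G : Multigraph) (X : Set G.V) : Multigraph where
  V := X
  E := {e : G.E // (G.ends e).1 ∈ X ∧ (G.ends e).2 ∈ X}
  finV := inferInstance
  finE := inferInstance
  ends e := (⟨(G.ends e.1).1, e.2.1⟩, ⟨(G.ends e.1).2, e.2.2⟩)
  loopless := by
    intro e h
    exact G.loopless e.1 (Subtype.ext_iff.mp h)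

/-- A graph is `ℋ`-immersion-free if it contains no member of `ℋ` as an immersion. -/
def ImmersionFree (H : Set Multigraph) (G : Multigraph) : Prop :=
  ∀ X ∈ H, ¬ Immersion X G

/-- `aic_ℋ(G)`: minimum number of edge deletions to reach an `ℋ`-immersion-free graph. -/
noncomputable def aic (H : Set Multigraph) (G : Multigraph) : ℕ :=
  sInf {w | ∃ F : Set G.E, ImmersionFree H (G.deleteEdges F) ∧ F.ncard = w}

/-- The class `C_{w,ℋ}`. -/
def aicClass (w : ℕ) (H : Set Multigraph) : Set Multigraph := {G | aic H G ≤ w}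

/-- `ℋ` is a `≤_i`-antichain. -/
def IsAntichainImm (H : Set Multigraph) : Prop :=
  ∀ G₁ ∈ H, ∀ G₂ ∈ H, Immersion G₁ G₂ → Isomorphic G₁ G₂

/-- Disjoint union of two multigraphs. -/
def disjUnion (G H : Multigraph) : Multigraph where
  V := G.V ⊕ H.V
  E := G.E ⊕ H.E
  finV := inferInstance
  finE := inferInstance
  ends := Sum.elim (fun e => (Sum.inl (G.ends e).1, Sum.inl (G.ends e).2))
                   (fun e => (Sum.inr (H.ends e).1, Sum.inr (H.ends e).2))
  loopless := by
    rintro (e | e)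
    · simpa using G.loopless e
    · simpa using H.loopless e

/-- Disjoint union of a finite family of multigraphs. -/
def sigmaUnion {m : ℕ} (Gs : Fin m → Multigraph) : Multigraph where
  V := Σ i, (Gs i).V
  E := Σ i, (Gs i).E
  finV := inferInstance
  finE := inferInstance
  ends e := (⟨e.1, ((Gs e.1).ends e.2).1⟩, ⟨e.1, ((Gs e.1).ends e.2).2⟩)
  loopless := by
    intro e h
    exact (Gs e.1).loopless e.2 (by simpa using h)

/-- `cw_σ(G,X) = δ_G(X) + cw_{σ_X}(G[X])`. -/
noncomputable def cwRel (G : Multigraph) (ρ : G.V → ℕ) (X : Set G.V) : ℕ :=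
  G.delta X + (G.induce X).cwOrd (fun v => ρ v.val)

/-- Membership in the family of prefixes relevant to `X`-linkedness: the complement
of `X` (the prefix right before `X` starts) and the prefixes ending inside `X`. -/
def IsXPrefix (G : Multigraph) (ρ : G.V → ℕ) (X : Set G.V) (P : Set G.V) : Prop :=
  P = Xᶜ ∨ ∃ v ∈ X, P = {z | ρ z ≤ ρ v}

/-- An `X`-linked ordering. -/
def XLinked (G : Multigraph) (ρ : G.V → ℕ) (X : Set G.V) : Prop :=
  (∀ u v : G.V, u ∉ X → v ∈ X → ρ u < ρ v) ∧
  ∀ P P' : Set G.V, G.IsXPrefix ρ X P → G.IsXPrefix ρ X P' → P ⊆ P' →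
    G.ConnectorBetween P P'ᶜ
      (sInf {w | ∃ Q : Set G.V, G.IsXPrefix ρ X Q ∧ P ⊆ Q ∧ Q ⊆ P' ∧ w = G.delta Q})

end Multigraph

namespace Multigraph

open Classical

@[reducible] noncomputable def fE (G : Multigraph) : Fintype G.E := Fintype.ofFinite _
@[reducible] noncomputable def fV (G : Multigraph) : Fintype G.V := Fintype.ofFinite _

attribute [local instance] fE fV

/-- Indicator of a proposition. -/
noncomputable def ind (p : Prop) : ℕ := if p then 1 else 0

def cross (G : Multigraph) (e : G.E) (S : Set G.V) : Prop :=
  ¬ ((G.ends e).1 ∈ S ↔ (G.ends e).2 ∈ S)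

theorem ncard_eq_sum_ind {α : Type*} [Fintype α] (p : α → Prop) :
    {a | p a}.ncard = ∑ a, ind (p a) := by
  rw [Set.ncard_eq_toFinset_card']
  simp [ind]

theorem delta_sum (G : Multigraph) (S : Set G.V) : G.delta S = ∑ e, ind (G.cross e S) :=
  ncard_eq_sum_ind _

theorem delta_submod (G : Multigraph) (X Y : Set G.V) :
    G.delta (X ∩ Y) + G.delta (X ∪ Y) ≤ G.delta X + G.delta Y := by
  simp only [delta_sum, ← Finset.sum_add_distrib]
  refine Finset.sum_le_sum fun e _ => ?_
  by_cases h1 : (G.ends e).1 ∈ X <;> by_cases h2 : (G.ends e).2 ∈ X <;>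
  by_cases h3 : (G.ends e).1 ∈ Y <;> by_cases h4 : (G.ends e).2 ∈ Y <;>
  simp [ind, cross, h1, h2, h3, h4]

theorem delta_mod (G : Multigraph) (X Y : Set G.V)
    (h : ∀ e, ((G.ends e).1 ∈ X → (G.ends e).1 ∉ Y → (G.ends e).2 ∈ Y → (G.ends e).2 ∈ X) ∧
      ((G.ends e).2 ∈ X → (G.ends e).2 ∉ Y → (G.ends e).1 ∈ Y → (G.ends e).1 ∈ X)) :
    G.delta X + G.delta Y = G.delta (X ∩ Y) + G.delta (X ∪ Y) := by
  simp only [delta_sum, ← Finset.sum_add_distrib]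
  refine Finset.sum_congr rfl fun e _ => ?_
  have := h e
  by_cases h1 : (G.ends e).1 ∈ X <;> by_cases h2 : (G.ends e).2 ∈ X <;>
  by_cases h3 : (G.ends e).1 ∈ Y <;> by_cases h4 : (G.ends e).2 ∈ Y <;>
  simp_all [ind, cross]

theorem exists_bound (G : Multigraph) (ρ : G.V → ℕ) : ∃ M, ∀ v, ρ v < M := by
  obtain ⟨M, hM⟩ := (Set.finite_range ρ).bddAbove
  exact ⟨M + 1, fun v => Nat.lt_succ_of_le (hM ⟨v, rfl⟩)⟩

/-- `ρ` is an ordering of width at most `k`. -/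
def Good (G : Multigraph) (k : ℕ) (ρ : G.V → ℕ) : Prop :=
  Function.Injective ρ ∧ ∀ v, G.delta {u | ρ u ≤ ρ v} ≤ k

theorem cutwidth_le_iff (G : Multigraph) (k : ℕ) :
    G.cutwidth ≤ k ↔ ∃ ρ, G.Good k ρ := by
  have hb : ∀ ρ : G.V → ℕ, BddAbove {w | ∃ v : G.V, w = G.delta {u | ρ u ≤ ρ v}} := by
    intro ρ
    have := (Set.finite_range (fun v : G.V => G.delta {u | ρ u ≤ ρ v})).bddAbove
    refine this.mono ?_
    rintro w ⟨v, rfl⟩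
    exact ⟨v, rfl⟩
  constructor
  · intro h
    have hne : {w | ∃ ρ : G.V → ℕ, Function.Injective ρ ∧ G.cwOrd ρ = w}.Nonempty := by
      refine ⟨_, fun v => (Fintype.equivFin G.V v : ℕ), ?_, rfl⟩
      intro a b hab
      exact (Fintype.equivFin G.V).injective (Fin.ext hab)
    obtain ⟨ρ, hρ, hw⟩ := Nat.sInf_mem hne
    refine ⟨ρ, hρ, fun v => ?_⟩
    have h1 : G.delta {u | ρ u ≤ ρ v} ≤ G.cwOrd ρ := le_csSup (hb ρ) ⟨v, rfl⟩
    have h2 : G.cwOrd ρ = G.cutwidth := hw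
    omega
  · rintro ⟨ρ, hρ, h⟩
    have h1 : G.cutwidth ≤ G.cwOrd ρ := Nat.sInf_le ⟨ρ, hρ, rfl⟩
    refine h1.trans ?_
    unfold cwOrd
    rcases Set.eq_empty_or_nonempty {w | ∃ v : G.V, w = G.delta {u | ρ u ≤ ρ v}} with he | he
    · rw [he]; simp
    · refine csSup_le he ?_
      rintro w ⟨v, rfl⟩
      exact h v

theorem delta_empty (G : Multigraph) : G.delta ∅ = 0 := by simp [delta]

/-- Down-closed sets are small cuts. -/
theorem Good.down {G : Multigraph} {k : ℕ} {ρ : G.V → ℕ} (h : G.Good k ρ) (S : Set G.V)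
    (hS : ∀ u v, ρ u ≤ ρ v → v ∈ S → u ∈ S) : G.delta S ≤ k := by
  rcases S.eq_empty_or_nonempty with rfl | hne
  · simp [delta_empty]
  · obtain ⟨v, hv, hm⟩ := Set.exists_max_image S ρ (Set.toFinite S) hne
    have : S = {u | ρ u ≤ ρ v} := by
      ext u
      exact ⟨fun hu => hm u hu, fun hu => hS u v hu hv⟩
    rw [this]; exact h.2 v

theorem lexset {M a b c d : ℕ} (h1 : c < M) (h2 : d < M) :
    a * M + c ≤ b * M + d ↔ a < b ∨ a = b ∧ c ≤ d := by
  constructor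
  · intro h
    rcases lt_trichotomy a b with hab | hab | hab
    · exact Or.inl hab
    · subst hab; right; exact ⟨rfl, by omega⟩
    · exfalso; have : (b + 1) * M ≤ a * M := Nat.mul_le_mul_right _ hab
      rw [add_mul] at this; omega
  · rintro (h | ⟨rfl, h⟩)
    · have : (a + 1) * M ≤ b * M := Nat.mul_le_mul_right _ h
      rw [add_mul] at this; omega
    · omega

theorem exists_local_max (s : ℕ → ℕ) (k a : ℕ) (hs : ∀ j, s j ≤ k) :
    ∃ i, a ≤ i ∧ i < a + (2 * k + 2) ∧ s i ≤ s (i + 1) ∧ s (i + 2) ≤ s (i + 1) := by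
  by_contra hc
  push Not at hc
  have h1 : ∃ i, a ≤ i ∧ i ≤ a + k ∧ s i ≤ s (i + 1) := by
    by_contra h
    push Not at h
    have key : ∀ n, n ≤ k + 1 → s (a + n) + n ≤ s a := by
      intro n
      induction n with
      | zero => simp
      | succ n ih =>
        intro hn
        have := ih (by omega)
        have := h (a + n) (by omega) (by omega)
        have e1 : a + (n + 1) = a + n + 1 := rfl
        rw [e1]; omega
    have := key (k + 1) le_rfl
    have := hs a
    omega
  obtain ⟨i, hi1, hi2, hi3⟩ := h1
  have key : ∀ n, n ≤ k + 1 → n ≤ s (i + n + 1) ∧ s (i + n) ≤ s (i + n + 1) := by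
    intro n
    induction n with
    | zero => intro _; exact ⟨by omega, hi3⟩
    | succ n ih =>
      intro hn
      have h1 := ih (by omega)
      have h2 := hc (i + n) (by omega) (by omega) h1.2
      have e1 : i + (n + 1) = i + n + 1 := by omega
      rw [e1]
      have e2 : i + n + 1 + 1 = i + n + 2 := rfl
      rw [e2]
      omega
  have := (key (k + 1) le_rfl).1
  have := hs (i + (k + 1) + 1)
  omega

/-- A bucketed ordering with respect to the set `D`. -/
def Bucketed (H : Multigraph) (D : Set H.V) (k m : ℕ) : Prop :=
  ∃ ρ T : H.V → ℕ, H.Good k ρ ∧ (∀ u v, ρ u ≤ ρ v → T u ≤ T v) ∧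
    (∀ v, T v % 2 = 0 ↔ v ∈ D) ∧ ∀ v, T v < m

theorem bucket_swap (H : Multigraph) (D : Set H.V) (k m j : ℕ) (ρ T : H.V → ℕ)
    (hg : H.Good k ρ) (hmono : ∀ u v, ρ u ≤ ρ v → T u ≤ T v)
    (hpar : ∀ v, T v % 2 = 0 ↔ v ∈ D) (hm : ∀ v, T v < m) (hj2 : 2 ≤ j) (hjm : j + 2 ≤ m)
    (hs1 : H.delta {u | T u < j - 1} ≤ H.delta {u | T u < j})
    (hs2 : H.delta {u | T u < j + 1} ≤ H.delta {u | T u < j})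
    (hno : ∀ e, ¬ (T (H.ends e).1 = j - 1 ∧ T (H.ends e).2 = j) ∧
      ¬ (T (H.ends e).2 = j - 1 ∧ T (H.ends e).1 = j)) :
    H.Bucketed D k (m - 2) := by
  obtain ⟨M, hM⟩ := H.exists_bound ρ
  set T' : H.V → ℕ := fun u => if T u < j then T u else T u - 2 with hT'
  have hlex : ∀ u v, T' u * M + ρ u ≤ T' v * M + ρ v ↔ T' u < T' v ∨ T' u = T' v ∧ ρ u ≤ ρ v :=
    fun u v => lexset (hM u) (hM v)
  have hlt : ∀ u v, T u < T v → ρ u < ρ v := by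
    intro u v h
    by_contra hc
    have := hmono v u (by omega)
    omega
  refine ⟨fun u => T' u * M + ρ u, T', ⟨?_, ?_⟩, ?_, ?_, ?_⟩
  · intro u v h
    have h1 := (hlex u v).1 h.le
    have h2 := (hlex v u).1 h.ge
    apply hg.1
    omega
  · intro v
    simp only [hlex]
    rcases lt_trichotomy (T v) (j - 1) with hv | hv | hv
    · convert hg.2 v using 3
      ext u
      have a1 := hmono u v; have a2 := hlt u v; have a3 := hlt v u
      simp only [hT']
      constructor
      · intro h; split_ifs at h <;> omega
      · intro h; split_ifs <;> omega
    · -- T v = j - 1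
      set X : Set H.V := {u | T' u < T' v ∨ T' u = T' v ∧ ρ u ≤ ρ v} with hX
      have hXm : ∀ u, u ∈ X ↔ (ρ u ≤ ρ v ∨ T u = j) := by
        intro u
        have a1 := hmono u v; have a2 := hlt u v; have a3 := hlt v u
        simp only [hX, hT', Set.mem_ofPred_eq]
        constructor
        · intro h; split_ifs at h <;> omega
        · intro h; split_ifs <;> omega
      have hmod := H.delta_mod X {u | T u < j} (by
        intro e
        have := hno e
        have a1 := hmono (H.ends e).1 v
        have a2 := hmono (H.ends e).2 v
        have b1 := hlt (H.ends e).1 v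
        have b2 := hlt (H.ends e).2 v
        simp only [hXm, Set.mem_ofPred_eq]
        omega)
      have e1 : X ∩ {u | T u < j} = {u | ρ u ≤ ρ v} := by
        ext u
        have a1 := hmono u v
        simp only [Set.mem_inter_iff, hXm, Set.mem_ofPred_eq]
        omega
      have e2 : X ∪ {u | T u < j} = {u | T u < j + 1} := by
        ext u
        have a1 := hmono u v
        simp only [Set.mem_union, hXm, Set.mem_ofPred_eq]
        omega
      rw [e1, e2] at hmod
      have := hg.2 v
      omega
    · rcases Nat.lt_or_ge j (T v) with hv2 | hv2
      · convert hg.2 v using 3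
        ext u
        have a1 := hmono u v; have a2 := hlt u v; have a3 := hlt v u
        simp only [hT']
        constructor
        · intro h; split_ifs at h <;> omega
        · intro h; split_ifs <;> omega
      · have hv3 : T v = j := by omega
        set X : Set H.V := {u | T' u < T' v ∨ T' u = T' v ∧ ρ u ≤ ρ v} with hX
        have hXm : ∀ u, u ∈ X ↔ (ρ u ≤ ρ v ∧ T u ≠ j - 1) := by
          intro u
          have a1 := hmono u v; have a2 := hlt u v; have a3 := hlt v u
          simp only [hX, hT', Set.mem_ofPred_eq]
          constructor
          · intro h; split_ifs at h <;> omega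
          · intro h; split_ifs <;> omega
        have hmod := H.delta_mod X {u | T u < j} (by
          intro e
          have := hno e
          have a1 := hmono (H.ends e).1 v
          have a2 := hmono (H.ends e).2 v
          have b1 := hlt (H.ends e).1 v
          have b2 := hlt (H.ends e).2 v
          simp only [hXm, Set.mem_ofPred_eq]
          omega)
        have e1 : X ∩ {u | T u < j} = {u | T u < j - 1} := by
          ext u
          have a1 := hlt u v
          simp only [Set.mem_inter_iff, hXm, Set.mem_ofPred_eq]
          omega
        have e2 : X ∪ {u | T u < j} = {u | ρ u ≤ ρ v} := by
          ext u
          have a1 := hlt u v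
          simp only [Set.mem_union, hXm, Set.mem_ofPred_eq]
          omega
        rw [e1, e2] at hmod
        have := hg.2 v
        omega
  · intro u v h
    have := (hlex u v).1 h
    omega
  · intro v
    rw [← hpar v]
    simp only [hT']
    split_ifs <;> omega
  · intro v
    have := hm v
    simp only [hT']
    split_ifs <;> omega

/-- The number of buckets. -/
def mm (k : ℕ) : ℕ := (k + 2) * (2 * k + 3) + 4

theorem bucket (H : Multigraph) (D : Set H.V) (k : ℕ) (hD : H.delta D ≤ k + 1)
    (hcw : H.cutwidth ≤ k) : H.Bucketed D k (mm k) := by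
  have hex : ∃ m, H.Bucketed D k m := by
    obtain ⟨ρ, hρ⟩ := (H.cutwidth_le_iff k).1 hcw
    obtain ⟨M, hM⟩ := H.exists_bound ρ
    refine ⟨2 * M + 2, ρ, fun v => 2 * ρ v + ind (v ∉ D), hρ, ?_, ?_, ?_⟩
    · intro u v h
      rcases h.lt_or_eq with h | h
      · have : ind (u ∉ D) ≤ 1 := by unfold ind; split_ifs <;> omega
        simp only; omega
      · rw [hρ.1 h]
    · intro v
      by_cases h : v ∈ D <;> simp [ind, h]
    · intro v
      have := hM v
      have : ind (v ∉ D) ≤ 1 := by unfold ind; split_ifs <;> omega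
      simp only; omega
  set m := Nat.find hex with hmdef
  obtain ⟨ρ, T, hg, hmono, hpar, hm⟩ := Nat.find_spec hex
  rw [← hmdef] at hm
  by_cases hle : m ≤ mm k
  · exact ⟨ρ, T, hg, hmono, hpar, fun v => (hm v).trans_le hle⟩
  exfalso
  have hmm : (k + 2) * (2 * k + 3) + 4 < m := by simpa [mm] using hle
  have hs : ∀ j, H.delta {u | T u < j} ≤ k := by
    intro j
    refine hg.down _ ?_
    intro u v h hv
    exact (hmono u v h).trans_lt hv
  have hcl : ∀ w : Fin (k + 2), ∃ e : H.E, H.cross e D ∧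
      ∃ i, 1 + w * (2 * k + 3) ≤ i ∧ i < 1 + w * (2 * k + 3) + (2 * k + 2) ∧
        max (T (H.ends e).1) (T (H.ends e).2) = i + 1 := by
    intro w
    obtain ⟨i, h1, h2, h3, h4⟩ := exists_local_max (fun j => H.delta {u | T u < j}) k
      (1 + w * (2 * k + 3)) hs
    by_contra hc
    push Not at hc
    have hw : ((w : ℕ) + 1) * (2 * k + 3) ≤ (k + 2) * (2 * k + 3) :=
      Nat.mul_le_mul_right _ w.2
    rw [add_mul] at hw
    have hb := bucket_swap H D k m (i + 1) ρ T hg hmono hpar hm (by omega) (by omega)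
      h3 h4 (by
        intro e
        by_contra hcc
        refine hc e ?_ i h1 h2 ?_
        · unfold cross
          rw [← hpar, ← hpar]
          omega
        · omega)
    exact Nat.find_min hex (m := m - 2) (by omega) hb
  choose e he i hi1 hi2 hi3 using hcl
  have hinj : Function.Injective e := by
    intro w w' h
    have h1 := hi3 w
    have h2 := hi3 w'
    rw [h] at h1
    have h3 : i w = i w' := by omega
    have a1 := hi1 w; have a2 := hi2 w; have a3 := hi1 w'; have a4 := hi2 w'
    rw [h3] at a1 a2
    have d1 : (i w' - 1) / (2 * k + 3) = w := by
      apply Nat.div_eq_of_lt_le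
      · omega
      · rw [add_mul]; omega
    have d2 : (i w' - 1) / (2 * k + 3) = w' := by
      apply Nat.div_eq_of_lt_le
      · omega
      · rw [add_mul]; omega
    exact Fin.ext (d1.symm.trans d2)
  have hcard : (Set.range e).ncard = k + 2 := by
    rw [Set.ncard_range_of_injective hinj]
    simp
  have : (Set.range e).ncard ≤ H.delta D := by
    apply Set.ncard_le_ncard _ (Set.toFinite _)
    rintro _ ⟨w, rfl⟩
    exact he w
  omega

theorem exists_linked (G : Multigraph) (k : ℕ) (h : ∃ ρ, G.Good k ρ) :
    ∃ ρ, G.Good k ρ ∧ ∀ (u w : G.V) (t : ℕ), ρ u ≤ ρ w →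
      (∀ v, ρ u ≤ ρ v → ρ v ≤ ρ w → t ≤ G.delta {z | ρ z ≤ ρ v}) →
      ∀ S : Set G.V, {z | ρ z ≤ ρ u} ⊆ S → S ⊆ {z | ρ z ≤ ρ w} → t ≤ G.delta S := by
  have hex : ∃ n, ∃ ρ, G.Good k ρ ∧ ∑ v, G.delta {z | ρ z ≤ ρ v} = n := by
    obtain ⟨ρ, hρ⟩ := h
    exact ⟨_, ρ, hρ, rfl⟩
  obtain ⟨ρ, hg, hsum⟩ := Nat.find_spec hex
  have hmin : ∀ ρ', G.Good k ρ' →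
      ∑ v, G.delta {z | ρ z ≤ ρ v} ≤ ∑ v, G.delta {z | ρ' z ≤ ρ' v} := by
    intro ρ' h'
    rw [hsum]
    exact Nat.find_min' hex ⟨ρ', h', rfl⟩
  refine ⟨ρ, hg, ?_⟩
  intro u w t huw ht S0 hS0 hS0'
  by_contra hlt
  push Not at hlt
  -- choose S minimizing delta
  obtain ⟨S, ⟨hPS, hSQ⟩, hSmin⟩ := Set.exists_min_image
    {S : Set G.V | {z | ρ z ≤ ρ u} ⊆ S ∧ S ⊆ {z | ρ z ≤ ρ w}} G.delta
    (Set.toFinite _) ⟨S0, hS0, hS0'⟩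
  have hSt : G.delta S < t := (hSmin S0 ⟨hS0, hS0'⟩).trans_lt hlt
  obtain ⟨M, hM⟩ := G.exists_bound ρ
  set ρ' : G.V → ℕ := fun v => ind (v ∉ S) * M + ρ v with hρ'
  have hlex : ∀ a b, ρ' a ≤ ρ' b ↔ ind (a ∉ S) < ind (b ∉ S) ∨
      ind (a ∉ S) = ind (b ∉ S) ∧ ρ a ≤ ρ b := fun a b => lexset (hM a) (hM b)
  have hin : ∀ v, v ∈ S → {z | ρ' z ≤ ρ' v} = {z | ρ z ≤ ρ v} ∩ S := by
    intro v hv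
    ext z
    by_cases hz : z ∈ S <;> simp [hlex, ind, hv, hz]
  have hout : ∀ v, v ∉ S → {z | ρ' z ≤ ρ' v} = {z | ρ z ≤ ρ v} ∪ S := by
    intro v hv
    ext z
    by_cases hz : z ∈ S <;> simp [hlex, ind, hv, hz]
  have hle : ∀ v, G.delta {z | ρ' z ≤ ρ' v} ≤ G.delta {z | ρ z ≤ ρ v} := by
    intro v
    have hsub := G.delta_submod {z | ρ z ≤ ρ v} S
    by_cases hv : v ∈ S
    · rw [hin v hv]
      have hvw : ρ v ≤ ρ w := hSQ hv
      have := hSmin ({z | ρ z ≤ ρ v} ∪ S) ⟨hPS.trans Set.subset_union_right,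
        Set.union_subset (fun z hz => le_trans (α := ℕ) hz hvw) hSQ⟩
      omega
    · rw [hout v hv]
      have huv : ρ u ≤ ρ v := by
        by_contra hc
        exact hv (hPS (show ρ v ≤ ρ u by omega))
      have := hSmin ({z | ρ z ≤ ρ v} ∩ S) ⟨Set.subset_inter
        (fun z hz => le_trans (α := ℕ) hz huv) hPS, Set.inter_subset_right.trans hSQ⟩
      omega
  have hgood : G.Good k ρ' := by
    refine ⟨?_, fun v => (hle v).trans (hg.2 v)⟩
    intro a b hab
    have h1 := (hlex a b).1 hab.le
    have h2 := (hlex b a).1 hab.ge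
    apply hg.1
    omega
  obtain ⟨v, hv, hvm⟩ := Set.exists_max_image S ρ (Set.toFinite S) ⟨u, hPS (le_refl (ρ u))⟩
  have hstrict : G.delta {z | ρ' z ≤ ρ' v} < G.delta {z | ρ z ≤ ρ v} := by
    rw [hin v hv]
    have e1 : {z | ρ z ≤ ρ v} ∩ S = S := Set.inter_eq_right.2 hvm
    rw [e1]
    have := ht v (hvm u (hPS (le_refl (ρ u)))) (hSQ hv)
    omega
  have := Finset.sum_lt_sum (s := Finset.univ) (fun v _ => hle v) ⟨v, Finset.mem_univ v, hstrict⟩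
  have := hmin ρ' hgood
  omega

/-! ### Flows -/

noncomputable def sg (G : Multigraph) (e : G.E) (u : G.V) : ℤ := if (G.ends e).1 = u then 1 else -1

noncomputable def Walk.unit {G : Multigraph} : ∀ {u v : G.V}, G.Walk u v → G.E → ℤ
  | _, _, .nil _ => fun _ => 0
  | u, _, .cons e _ p => fun e' => (if e' = e then G.sg e u else 0) + p.unit e'

def Walk.AllS {G : Multigraph} (R : G.E → ℤ → Prop) : ∀ {u v : G.V}, G.Walk u v → Prop
  | _, _, .nil _ => True
  | u, _, .cons e _ p => R e (G.sg e u) ∧ p.AllS R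

noncomputable def iz (p : Prop) : ℤ := if p then 1 else 0

noncomputable def out (G : Multigraph) (f : G.E → ℤ) (S : Set G.V) : ℤ :=
  ∑ e, f e * (iz ((G.ends e).1 ∈ S) - iz ((G.ends e).2 ∈ S))

theorem out_add (G : Multigraph) (f g : G.E → ℤ) (S : Set G.V) :
    G.out (fun e => f e + g e) S = G.out f S + G.out g S := by
  simp [out, add_mul, Finset.sum_add_distrib]

theorem out_sub (G : Multigraph) (f g : G.E → ℤ) (S : Set G.V) :
    G.out (fun e => f e - g e) S = G.out f S - G.out g S := by
  simp [out, sub_mul, Finset.sum_sub_distrib]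

theorem sg_mul {G : Multigraph} {e : G.E} {u v : G.V}
    (h : G.ends e = (u, v) ∨ G.ends e = (v, u)) (S : Set G.V) :
    G.sg e u * (iz ((G.ends e).1 ∈ S) - iz ((G.ends e).2 ∈ S)) = iz (u ∈ S) - iz (v ∈ S) := by
  have hl := G.loopless e
  rcases h with h | h <;> rw [h] at hl <;> simp only at hl <;> simp [sg, h, hl]

theorem out_unit {G : Multigraph} {u v : G.V} (p : G.Walk u v) (S : Set G.V) :
    G.out p.unit S = iz (u ∈ S) - iz (v ∈ S) := by
  induction p with
  | nil v => simp [Walk.unit, out]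
  | cons e h p ih =>
    simp only [Walk.unit]
    rw [out_add, ih]
    have := sg_mul h S
    simp only [out, ite_mul, zero_mul, Finset.sum_ite_eq', Finset.mem_univ, if_true]
    rw [this]; ring

theorem Walk.start_mem {G : Multigraph} {u v : G.V} (p : G.Walk u v) : u ∈ p.support := by
  cases p <;> simp [Walk.support]

theorem Walk.end_mem {G : Multigraph} {u v : G.V} (p : G.Walk u v) : v ∈ p.support := by
  induction p with
  | nil v => simp [Walk.support]
  | cons e h p ih => simp [Walk.support, ih]

theorem Walk.ends_mem {G : Multigraph} {u v : G.V} (p : G.Walk u v) (e : G.E) (he : e ∈ p.edges) :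
    (G.ends e).1 ∈ p.support ∧ (G.ends e).2 ∈ p.support := by
  induction p with
  | nil v => simp [Walk.edges] at he
  | cons e' h p ih =>
    simp only [Walk.edges, List.mem_cons] at he
    simp only [Walk.support, List.mem_cons]
    rcases he with rfl | he
    · have := p.start_mem
      rcases h with h | h <;> rw [h] <;> simp [this]
    · have := ih he
      tauto

theorem Walk.unit_eq_zero {G : Multigraph} {u v : G.V} (p : G.Walk u v) (e : G.E)
    (he : e ∉ p.edges) : p.unit e = 0 := by
  induction p with
  | nil v => rfl
  | cons e' h p ih =>
    simp only [Walk.edges, List.mem_cons, not_or] at he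
    simp [Walk.unit, he.1, ih he.2]

theorem Walk.unit_allS {G : Multigraph} {R : G.E → ℤ → Prop} {u v : G.V} (p : G.Walk u v)
    (hn : p.support.Nodup) (hR : p.AllS R) (e : G.E) (he : e ∈ p.edges) :
    R e (p.unit e) := by
  induction p with
  | nil v => simp [Walk.edges] at he
  | cons e' h p ih =>
    rename_i a b c
    simp only [Walk.support, List.nodup_cons] at hn
    simp only [Walk.AllS] at hR
    simp only [Walk.edges, List.mem_cons] at he
    have hne : e' ∉ p.edges := by
      intro hc
      have := p.ends_mem e' hc
      rcases h with h | h <;> rw [h] at this <;> tauto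
    rcases he with rfl | he
    · simpa [Walk.unit, p.unit_eq_zero e hne] using hR.1
    · have : e ≠ e' := by rintro rfl; exact hne he
      simpa [Walk.unit, this] using ih hn.2 hR.2 he

def Reach (G : Multigraph) (R : G.E → ℤ → Prop) (Y : Set G.V) : ℕ → G.V → Prop
  | 0, v => v ∈ Y
  | n + 1, v => ∃ e v', (G.ends e = (v, v') ∨ G.ends e = (v', v)) ∧ R e (G.sg e v) ∧ Reach G R Y n v'

theorem path_of_reach (G : Multigraph) (R : G.E → ℤ → Prop) (Y : Set G.V) (n : ℕ) :
    ∀ v, G.Reach R Y n v → (∀ m < n, ¬ G.Reach R Y m v) →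
    ∃ (y : G.V) (p : G.Walk v y), y ∈ Y ∧ p.support.Nodup ∧ p.AllS R ∧
      (∀ x ∈ p.support, x = v ∨ ∃ m < n, G.Reach R Y m x) ∧ (∀ x ∈ p.support, x ∈ Y → x = y) := by
  induction n with
  | zero =>
    intro v hv _
    exact ⟨v, .nil v, hv, by simp [Walk.support], trivial, by simp [Walk.support],
      by simp [Walk.support]⟩
  | succ n ih =>
    rintro v ⟨e, v', hev, hR, hr⟩ hmin
    obtain ⟨y, p, hy, hn, hall, hs, hY⟩ := ih v' hr (by
      intro m hm hc
      exact hmin (m + 1) (by omega) ⟨e, v', hev, hR, hc⟩)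
    refine ⟨y, .cons e hev p, hy, ?_, ⟨hR, hall⟩, ?_, ?_⟩
    · simp only [Walk.support, List.nodup_cons]
      refine ⟨fun hc => ?_, hn⟩
      rcases hs v hc with h | ⟨m, hm, h⟩
      · subst h; exact hmin n (by omega) hr
      · exact hmin m (by omega) h
    · intro x hx
      simp only [Walk.support, List.mem_cons] at hx
      rcases hx with rfl | hx
      · exact Or.inl rfl
      · right
        rcases hs x hx with rfl | ⟨m, hm, h⟩
        · exact ⟨n, by omega, hr⟩
        · exact ⟨m, by omega, h⟩
    · intro x hx hxY
      simp only [Walk.support, List.mem_cons] at hx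
      rcases hx with rfl | hx
      · exact absurd hxY (hmin 0 (by omega))
      · exact hY x hx hxY

/-- A path from `P` to the complement of `Q`, internally in `Q \ P`. -/
structure PQPath (G : Multigraph) (P Q : Set G.V) where
  u : G.V
  v : G.V
  p : G.Walk u v
  hu : u ∈ P
  hv : v ∉ Q
  nodup : p.support.Nodup
  hP : ∀ x ∈ p.support, x ∈ P → x = u
  hQ : ∀ x ∈ p.support, x ∉ Q → x = v

theorem exists_path_or_cut (G : Multigraph) (R : G.E → ℤ → Prop) (P Q : Set G.V) :
    (∃ W : PQPath G P Q, W.p.AllS R) ∨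
    ∃ S : Set G.V, P ⊆ S ∧ S ⊆ Q ∧ ∀ e v v', (G.ends e = (v, v') ∨ G.ends e = (v', v)) →
      v ∈ S → v' ∉ S → ¬ R e (G.sg e v) := by
  by_cases h : ∃ n, ∃ u ∈ P, G.Reach R Qᶜ n u
  · left
    obtain ⟨u, hu, hr⟩ := Nat.find_spec h
    have hmin := fun m hm => Nat.find_min h (m := m) hm
    obtain ⟨y, p, hy, hn, hall, hs, hY⟩ := path_of_reach G R Qᶜ _ u hr
      (fun m hm hc => hmin m hm ⟨u, hu, hc⟩)
    refine ⟨⟨u, y, p, hu, hy, hn, ?_, hY⟩, hall⟩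
    intro x hx hxP
    rcases hs x hx with h1 | ⟨m, hm, h1⟩
    · exact h1
    · exact absurd ⟨x, hxP, h1⟩ (hmin m hm)
  · right
    push Not at h
    refine ⟨{v | ∀ n, ¬ G.Reach R Qᶜ n v}, fun u hu n => h n u hu, ?_, ?_⟩
    · intro v hv
      by_contra hc
      exact hv 0 hc
    · intro e v v' he hv hv' hR
      simp only [Set.mem_ofPred_eq, not_forall, not_not] at hv'
      obtain ⟨n, hn⟩ := hv'
      exact hv (n + 1) ⟨e, v', he, hR, hn⟩

theorem flow_exists (G : Multigraph) (P Q : Set G.V) (t : ℕ)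
    (hcut : ∀ S, P ⊆ S → S ⊆ Q → t ≤ G.delta S) (n : ℕ) (hn : n ≤ t) :
    ∃ f : G.E → ℤ, (∀ e, |f e| ≤ 1) ∧ ∀ S, P ⊆ S → S ⊆ Q → G.out f S = n := by
  induction n with
  | zero => exact ⟨fun _ => 0, by simp, by simp [out]⟩
  | succ n ih =>
    obtain ⟨f, hf, hout⟩ := ih (by omega)
    rcases G.exists_path_or_cut (fun e s => |f e + s| ≤ 1) P Q with ⟨W, hW⟩ | ⟨S, hPS, hSQ, hS⟩
    · refine ⟨fun e => f e + W.p.unit e, fun e => ?_, fun S hPS hSQ => ?_⟩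
      · by_cases he : e ∈ W.p.edges
        · exact W.p.unit_allS W.nodup hW e he
        · beta_reduce; rw [W.p.unit_eq_zero e he]; simpa using hf e
      · rw [out_add, hout S hPS hSQ, out_unit]
        have h1 : W.u ∈ S := hPS W.hu
        have h2 : W.v ∉ S := fun h => W.hv (hSQ h)
        simp [iz, h1, h2]
    · exfalso
      have h1 := hout S hPS hSQ
      have h2 := hcut S hPS hSQ
      have h3 : (G.delta S : ℤ) ≤ G.out f S := by
        rw [delta_sum, out]
        push_cast
        refine Finset.sum_le_sum fun e _ => ?_
        have hb := abs_le.1 (hf e)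
        have hl := G.loopless e
        by_cases ha : (G.ends e).1 ∈ S <;> by_cases hb' : (G.ends e).2 ∈ S
        · simp [ind, cross, ha, hb', iz]
        · have := hS e _ _ (Or.inl rfl) ha hb'
          simp only [sg, if_true, abs_le] at this
          simp [ind, cross, ha, hb', iz]
          omega
        · have := hS e _ _ (Or.inr rfl) hb' ha
          simp only [sg, hl, if_false, abs_le] at this
          simp [ind, cross, ha, hb', iz]
          omega
        · simp [ind, cross, ha, hb', iz]
      omega

theorem paths_of_flow (G : Multigraph) (P Q : Set G.V) (n : ℕ) :
    ∀ f : G.E → ℤ, (∀ e, |f e| ≤ 1) → (∀ S, P ⊆ S → S ⊆ Q → G.out f S = n) →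
    ∃ W : Fin n → PQPath G P Q, (∀ i, ∀ e ∈ (W i).p.edges, f e ≠ 0) ∧
      ∀ i j, i ≠ j → ∀ e, e ∈ (W i).p.edges → e ∉ (W j).p.edges := by
  induction n with
  | zero => intro f _ _; exact ⟨Fin.elim0, fun i => i.elim0, fun i => i.elim0⟩
  | succ n ih =>
    intro f hf hout
    rcases G.exists_path_or_cut (fun e s => f e = s) P Q with ⟨W, hW⟩ | ⟨S, hPS, hSQ, hS⟩
    · have hu := W.p.unit_allS W.nodup hW
      obtain ⟨W', hW', hd⟩ := ih (fun e => f e - W.p.unit e) (fun e => by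
        by_cases he : e ∈ W.p.edges
        · rw [hu e he]; simp
        · rw [W.p.unit_eq_zero e he]; simpa using hf e) (fun S hPS hSQ => by
        rw [out_sub, hout S hPS hSQ, out_unit]
        have h1 : W.u ∈ S := hPS W.hu
        have h2 : W.v ∉ S := fun h => W.hv (hSQ h)
        simp [iz, h1, h2])
      have hnot : ∀ i, ∀ e ∈ (W' i).p.edges, e ∉ W.p.edges := by
        intro i e he hc
        apply hW' i e he
        rw [hu e hc]; simp
      refine ⟨Fin.cons W W', ?_, ?_⟩
      · intro i
        refine Fin.cases ?_ (fun i => ?_) i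
        · intro e he
          change e ∈ W.p.edges at he
          -- f e = unit e = ± 1
          have h1 : (fun e s => s = 1 ∨ s = -1) e (W.p.unit e) := by
            refine W.p.unit_allS (R := fun _ s => s = 1 ∨ s = -1) W.nodup ?_ e he
            have : ∀ {a b : G.V} (q : G.Walk a b), q.AllS (fun _ s => s = 1 ∨ s = -1) := by
              intro a b q
              induction q with
              | nil v => trivial
              | cons e h p ih => exact ⟨by unfold sg; split_ifs <;> simp, ih⟩
            exact this _
          rw [hu e he]
          simp only at h1
          omega
        · intro e he
          change e ∈ (W' i).p.edges at he
          have h1 := hW' i e he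
          rw [W.p.unit_eq_zero e (hnot i e he)] at h1
          simpa using h1
      · intro i j
        refine Fin.cases ?_ (fun i => ?_) i <;> refine Fin.cases ?_ (fun j => ?_) j
        · intro h; exact absurd rfl h
        · intro _ e he hc
          change e ∈ W.p.edges at he
          change e ∈ (W' j).p.edges at hc
          exact hnot j e hc he
        · intro _ e he hc
          change e ∈ (W' i).p.edges at he
          change e ∈ W.p.edges at hc
          exact hnot i e he hc
        · intro h e he
          change e ∈ (W' i).p.edges at he
          change e ∉ (W' j).p.edges
          exact hd i j (fun h' => h (by rw [h'])) e he
    · exfalso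
      have h1 := hout S hPS hSQ
      have h3 : G.out f S ≤ 0 := by
        rw [out]
        refine Finset.sum_nonpos fun e _ => ?_
        have hb := abs_le.1 (hf e)
        have hl := G.loopless e
        by_cases ha : (G.ends e).1 ∈ S <;> by_cases hb' : (G.ends e).2 ∈ S
        · simp [ha, hb', iz]
        · have := hS e _ _ (Or.inl rfl) ha hb'
          simp only [sg, if_true] at this
          simp [ha, hb', iz]
          omega
        · have := hS e _ _ (Or.inr rfl) hb' ha
          simp only [sg, hl, if_false] at this
          simp [ha, hb', iz]
          omega
        · simp [ha, hb', iz]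
      push_cast at h1
      omega

theorem menger (G : Multigraph) (P Q : Set G.V) (t : ℕ)
    (hcut : ∀ S, P ⊆ S → S ⊆ Q → t ≤ G.delta S) :
    ∃ W : Fin t → PQPath G P Q,
      ∀ i j, i ≠ j → ∀ e, e ∈ (W i).p.edges → e ∉ (W j).p.edges := by
  obtain ⟨f, hf, ho⟩ := G.flow_exists P Q t hcut t le_rfl
  obtain ⟨W, _, h⟩ := G.paths_of_flow P Q t f hf ho
  exact ⟨W, h⟩

/-! ### Linked boundaries -/

noncomputable def near (G : Multigraph) (P : Set G.V) (e : G.E) : G.V :=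
  if (G.ends e).1 ∈ P then (G.ends e).1 else (G.ends e).2

noncomputable def far (G : Multigraph) (P : Set G.V) (e : G.E) : G.V :=
  if (G.ends e).1 ∈ P then (G.ends e).2 else (G.ends e).1

def inner (G : Multigraph) (D : Set G.V) (e : G.E) : Prop :=
  (G.ends e).1 ∈ D ∧ (G.ends e).2 ∈ D

noncomputable def inn (G : Multigraph) (D S : Set G.V) : ℕ :=
  {e | G.inner D e ∧ G.cross e S}.ncard

/-- `x` enumerates edges of the boundary of `P`. -/
def Enum (G : Multigraph) (P : Set G.V) {t : ℕ} (x : Fin t → G.E) : Prop :=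
  Function.Injective x ∧ ∀ i, G.cross (x i) P

theorem Enum.surj {G : Multigraph} {P : Set G.V} {t : ℕ} {x : Fin t → G.E} (h : G.Enum P x)
    (ht : G.delta P = t) (e : G.E) (he : G.cross e P) : ∃ i, x i = e := by
  have h1 : Set.range x = {e | G.cross e P} := by
    apply Set.eq_of_subset_of_ncard_le _ _ (Set.toFinite _)
    · rintro _ ⟨i, rfl⟩; exact h.2 i
    · rw [Set.ncard_range_of_injective h.1]
      rw [Nat.card_fin]
      exact ht.le
  have : e ∈ Set.range x := by rw [h1]; exact he
  exact this

theorem Enum.near_mem {G : Multigraph} {P : Set G.V} {e : G.E} (h : G.cross e P) :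
    G.near P e ∈ P := by
  unfold cross at h
  unfold near
  split_ifs with h1
  · exact h1
  · tauto

theorem Enum.far_mem {G : Multigraph} {P : Set G.V} {e : G.E} (h : G.cross e P) :
    G.far P e ∉ P := by
  unfold cross at h
  unfold far
  split_ifs with h1
  · tauto
  · exact h1

theorem first_edge {G : Multigraph} {P : Set G.V} {u v : G.V} (p : G.Walk u v)
    (hu : u ∈ P) (hv : v ∉ P) (hP : ∀ x ∈ p.support, x ∈ P → x = u) :
    ∃ x ∈ p.edges, G.cross x P ∧ G.near P x = u := by
  cases p with
  | nil => exact absurd hu hv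
  | cons e h p =>
    rename_i w
    refine ⟨e, by simp [Walk.edges], ?_⟩
    have hl := G.loopless e
    have hw : w ∉ P := by
      intro hw
      have := hP w (by simp [Walk.support, p.start_mem]) hw
      subst this
      rcases h with h | h <;> rw [h] at hl <;> exact hl rfl
    rcases h with h | h <;> simp [cross, near, h, hu, hw]

theorem last_edge {G : Multigraph} {Q : Set G.V} {u v : G.V} (p : G.Walk u v)
    (hu : u ∈ Q) (hv : v ∉ Q) (hQ : ∀ x ∈ p.support, x ∉ Q → x = v) :
    ∃ y ∈ p.edges, G.cross y Q ∧ G.far Q y = v ∧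
      ∀ S : Set G.V, ¬ (u ∈ S ↔ G.near Q y ∈ S) → ∃ e ∈ p.edges, G.inner Q e ∧ G.cross e S := by
  induction p with
  | nil => exact absurd hu hv
  | cons e h p ih =>
    rename_i a w b
    by_cases hw : w ∈ Q
    · obtain ⟨y, hy, hc, hf, hS⟩ := ih hw hv (fun x hx hxQ => hQ x (by simp [Walk.support, hx]) hxQ)
      refine ⟨y, by simp [Walk.edges, hy], hc, hf, ?_⟩
      intro S hne
      by_cases haw : (a ∈ S ↔ w ∈ S)
      · obtain ⟨e', he', h1⟩ := hS S (by tauto)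
        exact ⟨e', by simp [Walk.edges, he'], h1⟩
      · refine ⟨e, by simp [Walk.edges], ?_, ?_⟩
        · rcases h with h | h <;> simp [inner, h, hu, hw]
        · rcases h with h | h <;> simp only [cross, h] <;> tauto
    · have hwb : w = b := hQ w (by simp [Walk.support, p.start_mem]) hw
      have hn : G.near Q e = a := by rcases h with h | h <;> simp [near, h, hu, hw]
      refine ⟨e, by simp [Walk.edges], ?_, ?_, ?_⟩
      · rcases h with h | h <;> simp [cross, h, hu, hw]
      · rw [← hwb]; rcases h with h | h <;> simp [far, h, hu, hw]
      · intro S hS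
        rw [hn] at hS
        exact absurd Iff.rfl hS

/-- The boundaries of `P` and `Q` are linked by edge-disjoint paths, respecting the labels. -/
def Link (G : Multigraph) (P Q : Set G.V) {t : ℕ} (x y : Fin t → G.E) : Prop :=
  ∃ W : Fin t → PQPath G P Q,
    (∀ i j, i ≠ j → ∀ e, e ∈ (W i).p.edges → e ∉ (W j).p.edges) ∧
    ∀ i, (W i).u = G.near P (x i) ∧ (W i).v = G.far Q (y i) ∧
      ∀ S : Set G.V, ¬ ((W i).u ∈ S ↔ G.near Q (y i) ∈ S) →
        ∃ e ∈ (W i).p.edges, G.inner Q e ∧ G.cross e S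

theorem link_exists (G : Multigraph) (P Q : Set G.V) (t : ℕ) (hPQ : P ⊆ Q)
    (hP : G.delta P = t) (hcut : ∀ S, P ⊆ S → S ⊆ Q → t ≤ G.delta S)
    (x : Fin t → G.E) (hx : G.Enum P x) : ∃ y : Fin t → G.E, G.Enum Q y ∧ G.Link P Q x y := by
  obtain ⟨W, hW⟩ := G.menger P Q t hcut
  have h1 := fun i => first_edge (W i).p (W i).hu (fun h => (W i).hv (hPQ h)) (W i).hP
  choose z hz hzc hzn using h1
  have hzi : Function.Injective z := by
    intro i j hij
    by_contra hne
    exact hW i j hne (z i) (hz i) (hij ▸ hz j)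
  have hzE : G.Enum P z := ⟨hzi, hzc⟩
  choose σ hσ using fun i => hzE.surj hP (x i) (hx.2 i)
  have hσi : Function.Injective σ := by
    intro i j hij
    apply hx.1
    rw [← hσ i, ← hσ j, hij]
  have h2 := fun i => last_edge (W (σ i)).p (hPQ (W (σ i)).hu) (W (σ i)).hv (W (σ i)).hQ
  choose y hy hyc hyf hyS using h2
  refine ⟨y, ⟨?_, hyc⟩, fun i => W (σ i), ?_, ?_⟩
  · intro i j hij
    by_contra hne
    exact hW (σ i) (σ j) (fun h => hne (hσi h)) (y i) (hy i) (hij ▸ hy j)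
  · intro i j hij
    exact hW (σ i) (σ j) (fun h => hij (hσi h))
  · intro i
    exact ⟨by rw [← hσ i, hzn], (hyf i).symm, hyS i⟩

theorem path_edge_not_inner {G : Multigraph} {P Q : Set G.V} (W : PQPath G P Q) (e : G.E)
    (he : e ∈ W.p.edges) : ¬ G.inner P e := by
  rintro ⟨h1, h2⟩
  have := W.p.ends_mem e he
  exact G.loopless e ((W.hP _ this.1 h1).trans (W.hP _ this.2 h2).symm)

theorem path_edge_not_inner' {G : Multigraph} {P Q : Set G.V} (W : PQPath G P Q) (e : G.E)
    (he : e ∈ W.p.edges) : ¬ G.inner Qᶜ e := by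
  rintro ⟨h1, h2⟩
  have := W.p.ends_mem e he
  exact G.loopless e ((W.hQ _ this.1 h1).trans (W.hQ _ this.2 h2).symm)

theorem link_ineq (G : Multigraph) (P Q : Set G.V) {t : ℕ} (hPQ : P ⊆ Q) (x y : Fin t → G.E)
    (hL : G.Link P Q x y) (S : Set G.V) (q : Fin t → Prop) :
    G.inn P S + ∑ i, ind (¬ (G.near P (x i) ∈ S ↔ q i)) ≤
      G.inn Q S + ∑ i, ind (¬ (G.near Q (y i) ∈ S ↔ q i)) := by
  obtain ⟨W, hd, hW⟩ := hL
  have h1 : ∑ i, ind (¬ (G.near P (x i) ∈ S ↔ q i)) ≤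
      {i | ¬ (G.near P (x i) ∈ S ↔ G.near Q (y i) ∈ S)}.ncard +
      ∑ i, ind (¬ (G.near Q (y i) ∈ S ↔ q i)) := by
    rw [ncard_eq_sum_ind, ← Finset.sum_add_distrib]
    refine Finset.sum_le_sum fun i _ => ?_
    by_cases h1 : G.near P (x i) ∈ S <;> by_cases h2 : G.near Q (y i) ∈ S <;>
      by_cases h3 : q i <;> simp [ind, h1, h2, h3]
  have h2 : G.inn P S + {i | ¬ (G.near P (x i) ∈ S ↔ G.near Q (y i) ∈ S)}.ncard ≤ G.inn Q S := by
    have hex : ∀ i, ∃ e, ¬ (G.near P (x i) ∈ S ↔ G.near Q (y i) ∈ S) →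
        e ∈ (W i).p.edges ∧ G.inner Q e ∧ G.cross e S := by
      intro i
      by_cases h : (G.near P (x i) ∈ S ↔ G.near Q (y i) ∈ S)
      · exact ⟨x i, fun h' => absurd h h'⟩
      · obtain ⟨e, he⟩ := (hW i).2.2 S (by rw [(hW i).1]; exact h)
        exact ⟨e, fun _ => he⟩
    choose e he using hex
    have hinj : Set.InjOn e {i | ¬ (G.near P (x i) ∈ S ↔ G.near Q (y i) ∈ S)} := by
      intro i hi j hj hij
      by_contra hne
      exact hd i j hne (e i) (he i hi).1 (hij ▸ (he j hj).1)
    rw [← Set.InjOn.ncard_image hinj]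
    unfold inn
    rw [← Set.ncard_union_eq _ (Set.toFinite _) (Set.toFinite _)]
    · apply Set.ncard_le_ncard _ (Set.toFinite _)
      rintro f (⟨⟨ha, hb⟩, hc⟩ | ⟨i, hi, rfl⟩)
      · exact ⟨⟨hPQ ha, hPQ hb⟩, hc⟩
      · exact (he i hi).2
    · rw [Set.disjoint_left]
      rintro f ⟨hf, _⟩ ⟨i, hi, rfl⟩
      exact path_edge_not_inner (W i) _ (he i hi).1 hf
  omega

theorem delta_decomp (G : Multigraph) (P : Set G.V) {t : ℕ} (x : Fin t → G.E) (hx : G.Enum P x)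
    (ht : G.delta P = t) (S : Set G.V) :
    G.delta S = G.inn P S + G.inn Pᶜ S + ∑ i, ind (¬ (G.near P (x i) ∈ S ↔ G.far P (x i) ∈ S)) := by
  have h1 : ∑ i, ind (¬ (G.near P (x i) ∈ S ↔ G.far P (x i) ∈ S)) =
      {e | G.cross e P ∧ G.cross e S}.ncard := by
    rw [← ncard_eq_sum_ind, ← Set.ncard_image_of_injective _ hx.1]
    congr 1
    have hiff : ∀ i, (¬ (G.near P (x i) ∈ S ↔ G.far P (x i) ∈ S)) ↔ G.cross (x i) S := by
      intro i
      unfold near far cross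
      split_ifs <;> tauto
    ext e
    constructor
    · rintro ⟨i, hi, rfl⟩
      exact ⟨hx.2 i, (hiff i).1 hi⟩
    · rintro ⟨h1, h2⟩
      obtain ⟨i, rfl⟩ := hx.surj ht e h1
      exact ⟨i, (hiff i).2 h2, rfl⟩
  rw [h1]
  unfold inn
  rw [ncard_eq_sum_ind, ncard_eq_sum_ind, ncard_eq_sum_ind, delta_sum, ← Finset.sum_add_distrib,
    ← Finset.sum_add_distrib]
  refine Finset.sum_congr rfl fun e _ => ?_
  by_cases h1 : (G.ends e).1 ∈ P <;> by_cases h2 : (G.ends e).2 ∈ P <;>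
  by_cases h3 : (G.ends e).1 ∈ S <;> by_cases h4 : (G.ends e).2 ∈ S <;>
  simp [ind, cross, inner, h1, h2, h3, h4]

/-- One side of a bucketed ordering with a prescribed interface. -/
def Half (G : Multigraph) (k m : ℕ) {t : ℕ} (D : Set G.V) (a : Fin t → G.V) (π : ℕ)
    (T0 T1 : Fin t → ℕ) (c : ℕ → ℕ) : Prop :=
  ∃ ρ T : G.V → ℕ, Set.InjOn ρ D ∧ (∀ v ∈ D, T v % 2 = π ∧ T v < m) ∧
    (∀ v ∈ D, G.inn D {u | T u < T v ∨ T u = T v ∧ ρ u ≤ ρ v} +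
      ∑ i, ind (¬ (a i ∈ {u | T u < T v ∨ T u = T v ∧ ρ u ≤ ρ v} ↔ T1 i < T v)) + c (T v) ≤ k) ∧
    (∀ j < m, j % 2 ≠ π →
      G.inn D {u | T u < j} + ∑ i, ind (¬ (a i ∈ {u | T u < j} ↔ T0 i < j)) ≤ c j)

theorem half_mono (G : Multigraph) (k m : ℕ) {t : ℕ} (P Q : Set G.V) (hPQ : P ⊆ Q)
    (x y : Fin t → G.E) (hL : G.Link P Q x y) (π : ℕ) (T0 T1 : Fin t → ℕ) (c : ℕ → ℕ)
    (h : G.Half k m Q (fun i => G.near Q (y i)) π T0 T1 c) :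
    G.Half k m P (fun i => G.near P (x i)) π T0 T1 c := by
  obtain ⟨ρ, T, h1, h2, h3, h4⟩ := h
  refine ⟨ρ, T, h1.mono hPQ, fun v hv => h2 v (hPQ hv), fun v hv => ?_, fun j hj hp => ?_⟩
  · have := G.link_ineq P Q hPQ x y hL {u | T u < T v ∨ T u = T v ∧ ρ u ≤ ρ v}
      (fun i => T1 i < T v)
    have := h3 v (hPQ hv)
    beta_reduce at *
    omega
  · have := G.link_ineq P Q hPQ x y hL {u | T u < j} (fun i => T0 i < j)
    have := h4 j hj hp
    beta_reduce at *
    omega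

theorem inn_congr (G : Multigraph) (D S S' : Set G.V) (h : ∀ v ∈ D, v ∈ S ↔ v ∈ S') :
    G.inn D S = G.inn D S' := by
  unfold inn
  congr 1
  ext e
  constructor
  · rintro ⟨⟨h1, h2⟩, h3⟩
    refine ⟨⟨h1, h2⟩, ?_⟩
    unfold cross at *
    rwa [← h _ h1, ← h _ h2]
  · rintro ⟨⟨h1, h2⟩, h3⟩
    refine ⟨⟨h1, h2⟩, ?_⟩
    unfold cross at *
    rwa [h _ h1, h _ h2]

theorem ind_tri (p q r : Prop) : ind (¬ (p ↔ r)) ≤ ind (¬ (p ↔ q)) + ind (¬ (r ↔ q)) := by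
  by_cases h1 : p <;> by_cases h2 : q <;> by_cases h3 : r <;> simp [ind, h1, h2, h3]

theorem half_merge (G : Multigraph) (k m : ℕ) {t : ℕ} (P : Set G.V)
    (x : Fin t → G.E) (hx : G.Enum P x) (ht : G.delta P = t) (T0 T1 : Fin t → ℕ) (c : ℕ → ℕ)
    (hA : G.Half k m P (fun i => G.near P (x i)) 0 T0 T1 c)
    (hB : G.Half k m Pᶜ (fun i => G.far P (x i)) 1 T1 T0 c) : G.cutwidth ≤ k := by
  obtain ⟨ρA, TA, a1, a2, a3, a4⟩ := hA
  obtain ⟨ρB, TB, b1, b2, b3, b4⟩ := hB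
  set ρ : G.V → ℕ := fun v => if v ∈ P then ρA v else ρB v with hρ
  set T : G.V → ℕ := fun v => if v ∈ P then TA v else TB v with hT
  have rA : ∀ v ∈ P, ρ v = ρA v ∧ T v = TA v := fun v hv => by simp [hρ, hT, hv]
  have rB : ∀ v, v ∉ P → ρ v = ρB v ∧ T v = TB v := fun v hv => by simp [hρ, hT, hv]
  obtain ⟨M, hM⟩ := G.exists_bound ρ
  have hlex : ∀ a b, T a * M + ρ a ≤ T b * M + ρ b ↔ T a < T b ∨
      T a = T b ∧ ρ a ≤ ρ b := fun a b => lexset (hM a) (hM b)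
  have pA : ∀ v ∈ P, T v % 2 = 0 := fun v hv => by rw [(rA v hv).2]; exact (a2 v hv).1
  have pB : ∀ v, v ∉ P → T v % 2 = 1 := fun v hv => by rw [(rB v hv).2]; exact (b2 v hv).1
  have nearP := fun i => Enum.near_mem (hx.2 i)
  have farP := fun i => Enum.far_mem (hx.2 i)
  rw [cutwidth_le_iff]
  refine ⟨fun v => T v * M + ρ v, ?_, ?_⟩
  · intro u v huv
    have h1 := (hlex u v).1 huv.le
    have h2 := (hlex v u).1 huv.ge
    have h3 : ρ u = ρ v := by omega
    have h4 : T u = T v := by omega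
    by_cases hu : u ∈ P <;> by_cases hv : v ∈ P
    · exact a1 hu hv (by rw [← (rA u hu).1, ← (rA v hv).1, h3])
    · have := pA u hu; have := pB v hv; omega
    · have := pB u hu; have := pA v hv; omega
    · exact b1 hu hv (by rw [← (rB u hu).1, ← (rB v hv).1, h3])
  · intro v
    simp only [hlex]
    rw [delta_decomp G P x hx ht]
    by_cases hv : v ∈ P
    · have q1 := a3 v hv
      have q2 := b4 (TA v) (a2 v hv).2 (by have := (a2 v hv).1; omega)
      have e1 : G.inn P {u | T u < T v ∨ T u = T v ∧ ρ u ≤ ρ v} =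
          G.inn P {u | TA u < TA v ∨ TA u = TA v ∧ ρA u ≤ ρA v} := by
        apply inn_congr
        intro u hu
        simp only [Set.mem_ofPred_eq, rA u hu, rA v hv]
      have hmB : ∀ u, u ∉ P → (u ∈ {u | T u < T v ∨ T u = T v ∧ ρ u ≤ ρ v} ↔ TB u < TA v) := by
        intro u hu
        have := pA v hv
        have := pB u hu
        simp only [Set.mem_ofPred_eq]
        rw [← (rB u hu).2, ← (rA v hv).2]
        omega
      have e2 : G.inn Pᶜ {u | T u < T v ∨ T u = T v ∧ ρ u ≤ ρ v} =
          G.inn Pᶜ {u | TB u < TA v} := by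
        apply inn_congr
        intro u hu
        rw [hmB u hu]; rfl
      have e3 : ∑ i, ind (¬ (G.near P (x i) ∈ {u | T u < T v ∨ T u = T v ∧ ρ u ≤ ρ v} ↔
            G.far P (x i) ∈ {u | T u < T v ∨ T u = T v ∧ ρ u ≤ ρ v})) ≤
          ∑ i, ind (¬ (G.near P (x i) ∈ {u | TA u < TA v ∨ TA u = TA v ∧ ρA u ≤ ρA v} ↔
            T1 i < TA v)) + ∑ i, ind (¬ (G.far P (x i) ∈ {u | TB u < TA v} ↔ T1 i < TA v)) := by
        rw [← Finset.sum_add_distrib]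
        refine Finset.sum_le_sum fun i _ => ?_
        rw [hmB _ (farP i)]
        have : (G.near P (x i) ∈ {u | T u < T v ∨ T u = T v ∧ ρ u ≤ ρ v}) ↔
            (G.near P (x i) ∈ {u | TA u < TA v ∨ TA u = TA v ∧ ρA u ≤ ρA v}) := by
          simp only [Set.mem_ofPred_eq, rA _ (nearP i), rA v hv]
        rw [this]
        exact ind_tri _ _ _
      rw [e1, e2]
      beta_reduce at q1 q2
      omega
    · have q1 := b3 v hv
      have q2 := a4 (TB v) (b2 v hv).2 (by have := (b2 v hv).1; omega)
      have e1 : G.inn Pᶜ {u | T u < T v ∨ T u = T v ∧ ρ u ≤ ρ v} =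
          G.inn Pᶜ {u | TB u < TB v ∨ TB u = TB v ∧ ρB u ≤ ρB v} := by
        apply inn_congr
        intro u hu
        simp only [Set.mem_ofPred_eq, rB u hu, rB v hv]
      have hmA : ∀ u, u ∈ P → (u ∈ {u | T u < T v ∨ T u = T v ∧ ρ u ≤ ρ v} ↔ TA u < TB v) := by
        intro u hu
        have := pB v hv
        have := pA u hu
        simp only [Set.mem_ofPred_eq]
        rw [← (rA u hu).2, ← (rB v hv).2]
        omega
      have e2 : G.inn P {u | T u < T v ∨ T u = T v ∧ ρ u ≤ ρ v} =
          G.inn P {u | TA u < TB v} := by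
        apply inn_congr
        intro u hu
        rw [hmA u hu]; rfl
      have e3 : ∑ i, ind (¬ (G.near P (x i) ∈ {u | T u < T v ∨ T u = T v ∧ ρ u ≤ ρ v} ↔
            G.far P (x i) ∈ {u | T u < T v ∨ T u = T v ∧ ρ u ≤ ρ v})) ≤
          ∑ i, ind (¬ (G.near P (x i) ∈ {u | TA u < TB v} ↔ T0 i < TB v)) +
          ∑ i, ind (¬ (G.far P (x i) ∈ {u | TB u < TB v ∨ TB u = TB v ∧ ρB u ≤ ρB v} ↔
            T0 i < TB v)) := by
        rw [← Finset.sum_add_distrib]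
        refine Finset.sum_le_sum fun i _ => ?_
        rw [hmA _ (nearP i)]
        have : (G.far P (x i) ∈ {u | T u < T v ∨ T u = T v ∧ ρ u ≤ ρ v}) ↔
            (G.far P (x i) ∈ {u | TB u < TB v ∨ TB u = TB v ∧ ρB u ≤ ρB v}) := by
          simp only [Set.mem_ofPred_eq, rB _ (farP i), rB v hv]
        rw [this]
        exact ind_tri _ _ _
      rw [e1, e2]
      beta_reduce at q1 q2
      omega


/-! ### Shortcutting along linked boundaries -/

def joinG (G : Multigraph) (P Q : Set G.V) (hPQ : P ⊆ Q) {t : ℕ} (a b : Fin t → G.V)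
    (ha : ∀ i, a i ∈ P) (hb : ∀ i, b i ∉ Q) : Multigraph where
  V := {v : G.V // v ∈ P ∨ v ∉ Q}
  E := {e : G.E // G.inner P e ∨ G.inner Qᶜ e} ⊕ Fin t
  finV := inferInstance
  finE := inferInstance
  ends := Sum.elim
    (fun e => (⟨(G.ends e.1).1, e.2.imp (fun h => h.1) (fun h => h.1)⟩,
      ⟨(G.ends e.1).2, e.2.imp (fun h => h.2) (fun h => h.2)⟩))
    (fun i => (⟨a i, Or.inl (ha i)⟩, ⟨b i, Or.inr (hb i)⟩))
  loopless := by
    rintro (e | i)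
    · intro h
      exact G.loopless e.1 (congrArg Subtype.val h)
    · intro h
      have h' : a i = b i := congrArg Subtype.val h
      exact hb i (h' ▸ hPQ (ha i))

theorem joinG_immersion (G : Multigraph) (P Q : Set G.V) (hPQ : P ⊆ Q) {t : ℕ}
    (W : Fin t → PQPath G P Q)
    (hd : ∀ i j, i ≠ j → ∀ e, e ∈ (W i).p.edges → e ∉ (W j).p.edges) :
    StrongImmersion (G.joinG P Q hPQ (fun i => (W i).u) (fun i => (W i).v)
      (fun i => (W i).hu) (fun i => (W i).hv)) G := by
  refine ⟨⟨⟨fun v => v.1, Subtype.val_injective, fun e => match e with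
    | Sum.inl e => Walk.cons e.1 (Or.inl rfl) (Walk.nil _)
    | Sum.inr i => (W i).p, ?_, ?_⟩, ?_⟩⟩
  · rintro (e | i)
    · have h := G.loopless e.1
      simp only [Walk.support, List.nodup_cons, List.mem_singleton, List.not_mem_nil,
        not_false_eq_true, List.nodup_nil, and_true]
      exact h
    · exact (W i).nodup
  · rintro (e | i) (e' | i') hne f hf hf'
    · simp only [Walk.edges, List.mem_singleton] at hf hf'
      exact hne (congrArg Sum.inl (Subtype.ext (hf.symm.trans hf')))
    · simp only [Walk.edges, List.mem_singleton] at hf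
      subst hf
      rcases e.2 with h | h
      · exact path_edge_not_inner (W i') _ hf' h
      · exact path_edge_not_inner' (W i') _ hf' h
    · simp only [Walk.edges, List.mem_singleton] at hf'
      subst hf'
      rcases e'.2 with h | h
      · exact path_edge_not_inner (W i) _ hf h
      · exact path_edge_not_inner' (W i) _ hf h
    · exact hd i i' (fun h => hne (congrArg Sum.inr h)) f hf hf'
  · rintro (e | i) x hx h1 h2
    · simp only [Walk.support, List.mem_cons, List.not_mem_nil, or_false] at hx
      rcases hx with hx | hx
      · exact absurd hx h1
      · exact absurd hx h2
    · rintro ⟨v, rfl⟩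
      rcases v.2 with h | h
      · exact h1 ((W i).hP _ hx h)
      · exact h2 ((W i).hQ _ hx h)

theorem joinG_not_iso (G : Multigraph) (P Q : Set G.V) (hPQ : P ⊆ Q) {t : ℕ} (a b : Fin t → G.V)
    (ha : ∀ i, a i ∈ P) (hb : ∀ i, b i ∉ Q) (z : G.V) (hz : z ∈ Q) (hz' : z ∉ P) :
    ¬ (G.joinG P Q hPQ a b ha hb).Isomorphic G := by
  rintro ⟨f⟩
  have hinj : Function.Injective (fun v : G.V => (f.fv.symm v).1) :=
    Subtype.val_injective.comp f.fv.symm.injective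
  obtain ⟨v, hv⟩ := (Finite.injective_iff_surjective.1 hinj) z
  rcases (f.fv.symm v).2 with h | h
  · exact hz' (hv ▸ h)
  · exact h (Set.mem_of_eq_of_mem hv hz)

theorem inn_join (G : Multigraph) (P Q : Set G.V) (hPQ : P ⊆ Q) {t : ℕ} (a b : Fin t → G.V)
    (ha : ∀ i, a i ∈ P) (hb : ∀ i, b i ∉ Q) (D S : Set G.V)
    (D' S' : Set (G.joinG P Q hPQ a b ha hb).V)
    (hD : ∀ e, G.inner D e → G.inner P e ∨ G.inner Qᶜ e)
    (hDD : ∀ v : (G.joinG P Q hPQ a b ha hb).V, v.1 ∈ D → v ∈ D')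
    (hS : ∀ v : (G.joinG P Q hPQ a b ha hb).V, v.1 ∈ D → (v.1 ∈ S ↔ v ∈ S')) :
    G.inn D S ≤ (G.joinG P Q hPQ a b ha hb).inn D' S' := by
  set A : Set {e : G.E // G.inner P e ∨ G.inner Qᶜ e} :=
    {e | G.inner D e.1 ∧ G.cross e.1 S} with hA
  have h1 : {e | G.inner D e ∧ G.cross e S} = Subtype.val '' A := by
    ext e
    constructor
    · intro h
      exact ⟨⟨e, hD e h.1⟩, h, rfl⟩
    · rintro ⟨e, h, rfl⟩
      exact h
  unfold inn
  rw [h1]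
  refine (Set.ncard_image_le (Set.toFinite A)).trans ?_
  rw [← Set.ncard_image_of_injective A (Sum.inl_injective (β := Fin t))]
  apply Set.ncard_le_ncard _ (Set.toFinite _)
  rintro _ ⟨e, ⟨⟨h2, h3⟩, h4⟩, rfl⟩
  refine ⟨⟨hDD _ h2, hDD _ h3⟩, ?_⟩
  unfold cross at *
  rw [hS ⟨(G.ends e.1).1, _⟩ h2, hS ⟨(G.ends e.1).2, _⟩ h3] at h4
  exact h4
  
theorem split_half (G : Multigraph) (P Q : Set G.V) (hPQ : P ⊆ Q) {t : ℕ} (a b : Fin t → G.V)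
    (ha : ∀ i, a i ∈ P) (hb : ∀ i, b i ∉ Q) (k : ℕ) (htk : t ≤ k + 1)
    (hcw : (G.joinG P Q hPQ a b ha hb).cutwidth ≤ k) :
    ∃ (T0 T1 : Fin t → ℕ) (c : ℕ → ℕ), (∀ i, T0 i < mm k) ∧ (∀ i, T1 i < mm k) ∧
      (∀ j, c j ≤ k) ∧ G.Half k (mm k) P a 0 T0 T1 c ∧ G.Half k (mm k) Qᶜ b 1 T1 T0 c := by
  set H := G.joinG P Q hPQ a b ha hb with hH
  set D : Set H.V := {v | v.1 ∈ P} with hDdef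
  set x : Fin t → H.E := Sum.inr with hx
  have hxE : H.Enum D x := by
    refine ⟨Sum.inr_injective, fun i h => ?_⟩
    exact hb i (hPQ (h.1 (ha i)))
  set A : Fin t → H.V := fun i => ⟨a i, Or.inl (ha i)⟩ with hAdef
  set B : Fin t → H.V := fun i => ⟨b i, Or.inr (hb i)⟩ with hBdef
  have hnear : ∀ i, H.near D (x i) = A i := fun i => if_pos (ha i)
  have hfar : ∀ i, H.far D (x i) = B i := fun i => if_pos (ha i)
  have hdelta : H.delta D = t := by
    have : {e | H.cross e D} = Set.range x := by
      ext e
      constructor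
      · intro h
        rcases e with e | i
        · exfalso
          apply h
          rcases e.2 with h' | h'
          · exact ⟨fun _ => h'.2, fun _ => h'.1⟩
          · exact ⟨fun q => absurd (hPQ q) h'.1, fun q => absurd (hPQ q) h'.2⟩
        · exact ⟨i, rfl⟩
      · rintro ⟨i, rfl⟩
        exact hxE.2 i
    show {e | H.cross e D}.ncard = t
    rw [this, Set.ncard_range_of_injective hxE.1, Nat.card_fin]
  obtain ⟨ρ, T, hρ, hmono, hpar, hm⟩ := bucket H D k (by omega) hcw
  have hdec := delta_decomp H D x hxE hdelta
  simp only [hnear, hfar] at hdec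
  set ρ' : G.V → ℕ := fun v => if h : v ∈ P ∨ v ∉ Q then ρ ⟨v, h⟩ else 0 with hρ'
  set T' : G.V → ℕ := fun v => if h : v ∈ P ∨ v ∉ Q then T ⟨v, h⟩ else 0 with hT'
  have rρ : ∀ v : H.V, ρ' v.1 = ρ v := fun v => dif_pos v.2
  have rT : ∀ v : H.V, T' v.1 = T v := fun v => dif_pos v.2
  have inP : ∀ (S : Set G.V) (S' : Set H.V), (∀ v : H.V, v.1 ∈ P → (v.1 ∈ S ↔ v ∈ S')) →
      G.inn P S ≤ H.inn D S' := fun S S' h =>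
    inn_join G P Q hPQ a b ha hb P S D S' (fun _ => Or.inl) (fun _ h => h) h
  have inQ : ∀ (S : Set G.V) (S' : Set H.V), (∀ v : H.V, v.1 ∉ Q → (v.1 ∈ S ↔ v ∈ S')) →
      G.inn Qᶜ S ≤ H.inn Dᶜ S' := fun S S' h =>
    inn_join G P Q hPQ a b ha hb Qᶜ S Dᶜ S' (fun _ => Or.inr) (fun _ h h' => h (hPQ h')) h
  have hlt : ∀ j, H.delta {u | T u < j} ≤ k := fun j =>
    hρ.down _ (fun u v huv hv => lt_of_le_of_lt (hmono u v huv) hv)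
  have hle : ∀ v, H.delta {u | T u < T v ∨ T u = T v ∧ ρ u ≤ ρ v} ≤ k := fun v => by
    apply hρ.down
    intro u w huw hw
    have := hmono u w huw
    simp only [Set.mem_ofPred_eq] at hw ⊢
    omega
  have parP : ∀ v : H.V, v.1 ∈ P → T v % 2 = 0 := fun v hv => (hpar v).2 hv
  have parQ : ∀ v : H.V, v.1 ∉ Q → T v % 2 = 1 := fun v hv => by
    have : ¬ T v % 2 = 0 := fun h => hv (hPQ ((hpar v).1 h))
    omega
  set c : ℕ → ℕ := fun j => if j % 2 = 0 then G.inn Qᶜ {u | T' u < j} else G.inn P {u | T' u < j}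
    with hc
  have sltP : ∀ j (v : H.V), (v.1 ∈ {u | T' u < j} ↔ v ∈ {u | T u < j}) := by
    intro j v
    simp only [Set.mem_ofPred_eq, rT]
  refine ⟨fun i => T (A i), fun i => T (B i), c, fun i => hm _, fun i => hm _, ?_, ?_, ?_⟩
  · intro j
    have h1 := inP {u | T' u < j} {u | T u < j} (fun v _ => sltP j v)
    have h2 := inQ {u | T' u < j} {u | T u < j} (fun v _ => sltP j v)
    have h3 := hlt j
    rw [hdec] at h3
    simp only [hc]
    split_ifs <;> omega
  · refine ⟨ρ', T', ?_, ?_, ?_, ?_⟩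
    · intro u hu v hv huv
      have := hρ.1 (a₁ := ⟨u, Or.inl hu⟩) (a₂ := ⟨v, Or.inl hv⟩)
        ((rρ ⟨u, Or.inl hu⟩).symm.trans (huv.trans (rρ ⟨v, Or.inl hv⟩)))
      exact congrArg Subtype.val this
    · intro v hv
      have := rT ⟨v, Or.inl hv⟩
      change T' v = _ at this
      rw [this]
      exact ⟨parP _ hv, hm _⟩
    · intro v hv
      set v' : H.V := ⟨v, Or.inl hv⟩ with hv'
      have e1 : T' v = T v' := rT v'
      have e2 : ρ' v = ρ v' := rρ v'
      rw [e1, e2]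
      have h1 := inP {u | T' u < T v' ∨ T' u = T v' ∧ ρ' u ≤ ρ v'}
        {u | T u < T v' ∨ T u = T v' ∧ ρ u ≤ ρ v'} (fun u _ => by
          simp only [Set.mem_ofPred_eq, rT, rρ])
      have h2 := inQ {u | T' u < T v'} {u | T u < T v' ∨ T u = T v' ∧ ρ u ≤ ρ v'} (fun u hu => by
          simp only [Set.mem_ofPred_eq, rT]
          have := parP v' hv
          have := parQ u hu
          omega)
      have h3 := hle v'
      rw [hdec] at h3
      have h4 : ∑ i, ind (¬ (a i ∈ {u | T' u < T v' ∨ T' u = T v' ∧ ρ' u ≤ ρ v'} ↔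
          T (B i) < T v')) = ∑ i, ind (¬ (A i ∈ {u | T u < T v' ∨ T u = T v' ∧ ρ u ≤ ρ v'} ↔
          B i ∈ {u | T u < T v' ∨ T u = T v' ∧ ρ u ≤ ρ v'})) := by
        refine Finset.sum_congr rfl fun i _ => ?_
        have ea : T' (a i) = T (A i) := rT (A i)
        have eb : ρ' (a i) = ρ (A i) := rρ (A i)
        congr 2
        simp only [Set.mem_ofPred_eq, ea, eb, eq_iff_iff]
        have := parP v' hv
        have := parQ (B i) (hb i)
        have : (T (B i) < T v') ↔ (T (B i) < T v' ∨ T (B i) = T v' ∧ ρ (B i) ≤ ρ v') := by omega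
        rw [← this]
      have h5 : c (T v') = G.inn Qᶜ {u | T' u < T v'} := if_pos (parP v' hv)
      rw [h5, h4]
      omega
    · intro j hj hp
      have h5 : c j = G.inn P {u | T' u < j} := if_neg hp
      rw [h5]
      have h4 : ∑ i, ind (¬ (a i ∈ {u | T' u < j} ↔ T (A i) < j)) = 0 := by
        refine Finset.sum_eq_zero fun i _ => ?_
        have ea : T' (a i) = T (A i) := rT (A i)
        simp [ind, ea]
      rw [h4]
      simp
  · refine ⟨ρ', T', ?_, ?_, ?_, ?_⟩
    · intro u hu v hv huv
      have := hρ.1 (a₁ := ⟨u, Or.inr hu⟩) (a₂ := ⟨v, Or.inr hv⟩)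
        ((rρ ⟨u, Or.inr hu⟩).symm.trans (huv.trans (rρ ⟨v, Or.inr hv⟩)))
      exact congrArg Subtype.val this
    · intro v hv
      have := rT ⟨v, Or.inr hv⟩
      change T' v = _ at this
      rw [this]
      exact ⟨parQ _ hv, hm _⟩
    · intro v hv
      set v' : H.V := ⟨v, Or.inr hv⟩ with hv'
      have e1 : T' v = T v' := rT v'
      have e2 : ρ' v = ρ v' := rρ v'
      rw [e1, e2]
      have h1 := inQ {u | T' u < T v' ∨ T' u = T v' ∧ ρ' u ≤ ρ v'}
        {u | T u < T v' ∨ T u = T v' ∧ ρ u ≤ ρ v'} (fun u _ => by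
          simp only [Set.mem_ofPred_eq, rT, rρ])
      have h2 := inP {u | T' u < T v'} {u | T u < T v' ∨ T u = T v' ∧ ρ u ≤ ρ v'} (fun u hu => by
          simp only [Set.mem_ofPred_eq, rT]
          have := parQ v' hv
          have := parP u hu
          omega)
      have h3 := hle v'
      rw [hdec] at h3
      have h4 : ∑ i, ind (¬ (b i ∈ {u | T' u < T v' ∨ T' u = T v' ∧ ρ' u ≤ ρ v'} ↔
          T (A i) < T v')) = ∑ i, ind (¬ (A i ∈ {u | T u < T v' ∨ T u = T v' ∧ ρ u ≤ ρ v'} ↔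
          B i ∈ {u | T u < T v' ∨ T u = T v' ∧ ρ u ≤ ρ v'})) := by
        refine Finset.sum_congr rfl fun i _ => ?_
        have ea : T' (b i) = T (B i) := rT (B i)
        have eb : ρ' (b i) = ρ (B i) := rρ (B i)
        congr 2
        simp only [Set.mem_ofPred_eq, ea, eb, eq_iff_iff]
        have := parQ v' hv
        have := parP (A i) (ha i)
        have : (T (A i) < T v') ↔ (T (A i) < T v' ∨ T (A i) = T v' ∧ ρ (A i) ≤ ρ v') := by omega
        rw [← this]
        exact Iff.comm
      have h5 : c (T v') = G.inn P {u | T' u < T v'} := if_neg (by have := parQ v' hv; omega)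
      rw [h5, h4]
      omega
    · intro j hj hp
      have h5 : c j = G.inn Qᶜ {u | T' u < j} := if_pos (by omega)
      rw [h5]
      have h4 : ∑ i, ind (¬ (b i ∈ {u | T' u < j} ↔ T (B i) < j)) = 0 := by
        refine Finset.sum_eq_zero fun i _ => ?_
        have ea : T' (b i) = T (B i) := rT (B i)
        simp [ind, ea]
      rw [h4]
      simp

/-- Interfaces. -/
abbrev Itf (k t m : ℕ) : Type := (Fin t → Fin m) × (Fin t → Fin m) × (Fin m → Fin (k + 1))

def extc {k m : ℕ} (c : Fin m → Fin (k + 1)) (j : ℕ) : ℕ := if h : j < m then c ⟨j, h⟩ else 0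

/-- Both halves conform to the given interface. -/
def HalfA (G : Multigraph) (k m : ℕ) {t : ℕ} (D : Set G.V) (a : Fin t → G.V) (I : Itf k t m) :
    Prop :=
  G.Half k m D a 0 (fun i => I.1 i) (fun i => I.2.1 i) (extc I.2.2)

def HalfB (G : Multigraph) (k m : ℕ) {t : ℕ} (D : Set G.V) (a : Fin t → G.V) (I : Itf k t m) :
    Prop :=
  G.Half k m D a 1 (fun i => I.2.1 i) (fun i => I.1 i) (extc I.2.2)

theorem half_congr (G : Multigraph) (k m : ℕ) {t : ℕ} (D : Set G.V) (a : Fin t → G.V) (π : ℕ)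
    (T0 T1 : Fin t → ℕ) (c c' : ℕ → ℕ) (hc : ∀ j < m, c j = c' j) (h : G.Half k m D a π T0 T1 c) :
    G.Half k m D a π T0 T1 c' := by
  obtain ⟨ρ, T, h1, h2, h3, h4⟩ := h
  refine ⟨ρ, T, h1, h2, fun v hv => ?_, fun j hj hp => ?_⟩
  · rw [← hc _ (h2 v hv).2]; exact h3 v hv
  · rw [← hc j hj]; exact h4 j hj hp

theorem step_itf (G : Multigraph) (k : ℕ)
    (hmin : ∀ G', StrongImmersion G' G → ¬ G'.Isomorphic G → G'.cutwidth ≤ k)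
    (P Q : Set G.V) (hPQ : P ⊆ Q) (hz : ∃ z, z ∈ Q ∧ z ∉ P) {t : ℕ} (htk : t ≤ k + 1)
    (x y : Fin t → G.E) (hL : G.Link P Q x y) :
    ∃ I : Itf k t (mm k), G.HalfA k (mm k) P (fun i => G.near P (x i)) I ∧
      G.HalfB k (mm k) Qᶜ (fun i => G.far Q (y i)) I := by
  obtain ⟨W, hd, hW⟩ := hL
  obtain ⟨z, hz, hz'⟩ := hz
  have hcw := hmin _ (G.joinG_immersion P Q hPQ W hd)
    (G.joinG_not_iso P Q hPQ _ _ _ _ z hz hz')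
  obtain ⟨T0, T1, c, h0, h1, hc, hA, hB⟩ := G.split_half P Q hPQ _ _ _ _ k htk hcw
  have ea : (fun i => (W i).u) = fun i => G.near P (x i) := funext fun i => (hW i).1
  have eb : (fun i => (W i).v) = fun i => G.far Q (y i) := funext fun i => (hW i).2.1
  rw [ea] at hA
  rw [eb] at hB
  have hcc : ∀ j < mm k, c j = extc (k := k) (m := mm k)
      (fun j => ⟨c j, Nat.lt_succ_of_le (hc j)⟩) j := by
    intro j hj
    simp [extc, hj]
  refine ⟨⟨fun i => ⟨T0 i, h0 i⟩, fun i => ⟨T1 i, h1 i⟩,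
    fun j => ⟨c j, Nat.lt_succ_of_le (hc j)⟩⟩, ?_, ?_⟩
  · exact half_congr G k _ _ _ _ _ _ _ _ hcc hA
  · exact half_congr G k _ _ _ _ _ _ _ _ hcc hB

theorem exists_enum (G : Multigraph) (P : Set G.V) (t : ℕ) (h : G.delta P = t) :
    ∃ x : Fin t → G.E, G.Enum P x := by
  have h1 : Nat.card {e | G.cross e P} = t := h
  obtain ⟨f⟩ : Nonempty (Fin t ≃ {e | G.cross e P}) := by
    rw [← h1]
    exact ⟨(Finite.equivFin _).symm⟩
  exact ⟨fun i => (f i).1, Subtype.val_injective.comp f.injective, fun i => (f i).2⟩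

theorem chain_bound (G : Multigraph) (k : ℕ) (hcw : ¬ G.cutwidth ≤ k)
    (hmin : ∀ G', StrongImmersion G' G → ¬ G'.Isomorphic G → G'.cutwidth ≤ k)
    (t : ℕ) (htk : t ≤ k + 1) (P : ℕ → Set G.V) (M : ℕ) (hP : ∀ n, P n ⊆ P (n + 1))
    (hd : ∀ n, G.delta (P n) = t)
    (hcut : ∀ n S, P n ⊆ S → S ⊆ P (n + 1) → t ≤ G.delta S)
    (hz : ∀ n < M, ∃ z, z ∈ P (n + 1) ∧ z ∉ P n) : M ≤ Fintype.card (Itf k t (mm k)) := by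
  obtain ⟨x0, hx0⟩ := G.exists_enum (P 0) t (hd 0)
  have hnext : ∀ n (x : {x : Fin t → G.E // G.Enum (P n) x}),
      ∃ y : {y : Fin t → G.E // G.Enum (P (n + 1)) y}, G.Link (P n) (P (n + 1)) x.1 y.1 := by
    intro n x
    obtain ⟨y, hy, hL⟩ := G.link_exists (P n) (P (n + 1)) t (hP n) (hd n) (hcut n) x.1 x.2
    exact ⟨⟨y, hy⟩, hL⟩
  choose nx hnx using hnext
  let xs : ∀ n, {x : Fin t → G.E // G.Enum (P n) x} := fun n => Nat.rec ⟨x0, hx0⟩ (fun n x => nx n x) n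
  have hL : ∀ n, G.Link (P n) (P (n + 1)) (xs n).1 (xs (n + 1)).1 := fun n => hnx n (xs n)
  have hI : ∀ n : Fin M, ∃ I : Itf k t (mm k),
      G.HalfA k (mm k) (P n) (fun i => G.near (P n) ((xs n).1 i)) I ∧
      G.HalfB k (mm k) (P (n + 1))ᶜ (fun i => G.far (P (n + 1)) ((xs (n + 1)).1 i)) I := fun n =>
    G.step_itf k hmin (P n) (P (n + 1)) (hP n) (hz n n.2) htk _ _ (hL n)
  choose I hA hB using hI
  by_contra hlt
  push Not at hlt
  obtain ⟨i, j, hne, hij⟩ := Fintype.exists_ne_map_eq_of_card_lt I (by simpa using hlt)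
  have hdown : ∀ (J : Itf k t (mm k)) (a d : ℕ),
      G.HalfA k (mm k) (P (a + d)) (fun i => G.near (P (a + d)) ((xs (a + d)).1 i)) J →
      G.HalfA k (mm k) (P a) (fun i => G.near (P a) ((xs a).1 i)) J := by
    intro J a d
    induction d with
    | zero => exact fun h => h
    | succ d ih =>
      intro h
      exact ih (G.half_mono k _ _ _ (hP (a + d)) _ _ (hL (a + d)) _ _ _ _ h)
  have key : ∀ i j : Fin M, i < j → I i = I j → False := by
    intro i j hlt hij
    have h1 := hA j
    obtain ⟨d, hdd⟩ := Nat.exists_eq_add_of_le (show (i : ℕ) + 1 ≤ j from hlt)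
    rw [hdd] at h1
    have h2 := hdown _ _ _ h1
    rw [← hij] at h2
    exact hcw (G.half_merge k _ (P (i + 1)) (xs (i + 1)).1 (xs (i + 1)).2 (hd _) _ _ _ h2 (hB i))
  rcases lt_or_gt_of_ne hne with h | h
  · exact key i j h hij
  · exact key j i h hij.symm

theorem card_itf (k t m : ℕ) : Fintype.card (Itf k t m) = m ^ t * (m ^ t * (k + 1) ^ m) := by
  simp [Itf]

/-! ### Finding a long chain -/

theorem lagergren (L : ℕ) (f : ℕ → ℕ) : ∀ (r t0 a : ℕ),
    (∀ i, a ≤ i → i < a + L ^ r → t0 ≤ f i ∧ f i < t0 + r) → 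
    ∃ (t : ℕ) (s : ℕ → ℕ), (∀ w, w + 1 < L → s w < s (w + 1)) ∧
      (∀ w < L, a ≤ s w ∧ s w < a + L ^ r ∧ f (s w) = t) ∧ 
      ∀ i, s 0 ≤ i → i ≤ s (L - 1) → t ≤ f i := by
  rcases Nat.eq_zero_or_pos L with rfl | hL
  · intro r t0 a h
    exact ⟨0, fun _ => 0, by simp, by simp, by simp⟩
  intro r
  induction r with
  | zero =>
    intro t0 a h
    have := h a le_rfl (by simp)
    omega
  | succ r ih =>
    intro t0 a h
    by_cases hw : ∀ w < L, ∃ i, a + w * L ^ r ≤ i ∧ i < a + w * L ^ r + L ^ r ∧ f i = t0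
    · have hw' : ∀ w, ∃ i, w < L → a + w * L ^ r ≤ i ∧ i < a + w * L ^ r + L ^ r ∧ f i = t0 := by
        intro w
        by_cases hwL : w < L
        · obtain ⟨i, hi⟩ := hw w hwL
          exact ⟨i, fun _ => hi⟩
        · exact ⟨0, fun h => absurd h hwL⟩
      choose s hs using hw'
      have hb : ∀ w < L, a ≤ s w ∧ s w < a + L ^ (r + 1) := by
        intro w hwL
        have h1 := hs w hwL
        have h2 : (w + 1) * L ^ r ≤ L * L ^ r := Nat.mul_le_mul_right _ hwL
        rw [pow_succ, mul_comm (L ^ r) L]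
        rw [add_mul, one_mul] at h2
        omega
      refine ⟨t0, s, ?_, ?_, ?_⟩
      · intro w hwL
        have h1 := hs w (by omega)
        have h2 := hs (w + 1) hwL
        rw [add_mul, one_mul] at h2
        omega
      · intro w hwL
        exact ⟨(hb w hwL).1, (hb w hwL).2, (hs w hwL).2.2⟩
      · intro i h1 h2
        exact (h i ((hb 0 hL).1.trans h1) (lt_of_le_of_lt h2 (hb (L - 1) (by omega)).2)).1
    · push Not at hw
      obtain ⟨w, hwL, hw⟩ := hw
      have h2 : (w + 1) * L ^ r ≤ L * L ^ r := Nat.mul_le_mul_right _ hwL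
      rw [add_mul, one_mul] at h2
      have h3 : L ^ (r + 1) = L * L ^ r := by rw [pow_succ, mul_comm]
      obtain ⟨t, s, hs1, hs2, hs3⟩ := ih (t0 + 1) (a + w * L ^ r) (by
        intro i hi1 hi2
        have := h i (by omega) (by omega)
        have := hw i hi1 hi2
        omega)
      refine ⟨t, s, hs1, ?_, hs3⟩
      intro w' hw'
      have := hs2 w' hw'
      omega

theorem exists_listing (G : Multigraph) (ρ : G.V → ℕ) (hρ : Function.Injective ρ) [Nonempty G.V] :
    ∃ vv : ℕ → G.V, (∀ i j, i < Nat.card G.V → j < Nat.card G.V → (ρ (vv i) ≤ ρ (vv j) ↔ i ≤ j)) ∧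
      ∀ v, ∃ i < Nat.card G.V, vv i = v := by
  have hc : (Finset.univ.image ρ).card = Nat.card G.V := by
    rw [Finset.card_image_of_injective _ hρ, Finset.card_univ, Nat.card_eq_fintype_card]
  set g := (Finset.univ.image ρ).orderEmbOfFin hc with hg
  have hex : ∀ i, ∃ v, ρ v = g i := by
    intro i
    have := Finset.orderEmbOfFin_mem (Finset.univ.image ρ) hc i
    obtain ⟨v, _, hv⟩ := Finset.mem_image.1 this
    exact ⟨v, hv⟩
  choose e he using hex
  refine ⟨fun i => if h : i < Nat.card G.V then e ⟨i, h⟩ else Classical.arbitrary _, ?_, ?_⟩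
  · intro i j hi hj
    simp only [hi, hj, dif_pos, he]
    rw [g.le_iff_le]
    rfl
  · intro v
    have h1 : ρ v ∈ Set.range g := by
      rw [Finset.range_orderEmbOfFin]
      simp
    obtain ⟨i, hi⟩ := h1
    refine ⟨i, i.2, ?_⟩
    simp only [i.2, dif_pos]
    apply hρ
    rw [he, hi]

theorem card_V_lt (G : Multigraph) (k : ℕ) (hcw : ¬ G.cutwidth ≤ k)
    (hmin : ∀ G', StrongImmersion G' G → ¬ G'.Isomorphic G → G'.cutwidth ≤ k)
    (hk1 : ∃ ρ, G.Good (k + 1) ρ) (L : ℕ)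
    (hL : ∀ t ≤ k + 1, Fintype.card (Itf k t (mm k)) + 2 ≤ L) : Nat.card G.V < L ^ (k + 2) := by
  by_contra hlt
  push Not at hlt
  have hL2 : 2 ≤ L := le_trans (by omega) (hL 0 (by omega))
  have hpos : 0 < L ^ (k + 2) := by positivity
  have : Nonempty G.V := by
    rw [← not_isEmpty_iff]
    intro h
    have := Nat.card_of_isEmpty (α := G.V)
    omega
  obtain ⟨ρ, hρ, hlink⟩ := G.exists_linked (k + 1) hk1
  obtain ⟨vv, hv1, hv2⟩ := G.exists_listing ρ hρ.1
  obtain ⟨t, s, hs1, hs2, hs3⟩ := lagergren L (fun i => G.delta {u | ρ u ≤ ρ (vv i)}) (k + 2) 0 0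
    (by
      intro i _ _
      have := hρ.2 (vv i)
      omega)
  have hsn : ∀ w < L, s w < Nat.card G.V := fun w hw => by
    have := (hs2 w hw).2.1
    omega
  have hsm : ∀ d w, w + d < L → s w ≤ s (w + d) := by
    intro d
    induction d with
    | zero => intro w _; exact le_rfl
    | succ d ih =>
      intro w hw
      have h1 := ih w (by omega)
      have h2 := hs1 (w + d) (by omega)
      exact h1.trans h2.le
  have hsm' : ∀ w w', w ≤ w' → w' < L → s w ≤ s w' := by
    intro w w' h h'
    obtain ⟨d, rfl⟩ := Nat.exists_eq_add_of_le h
    exact hsm d w h'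
  have hmin' : ∀ n, min n (L - 1) < L := fun n => by omega
  have htk : t ≤ k + 1 := by
    rw [← (hs2 0 (by omega)).2.2]
    exact hρ.2 _
  have hstep : ∀ n, s (min n (L - 1)) ≤ s (min (n + 1) (L - 1)) := fun n =>
    hsm' _ _ (by omega) (hmin' _)
  have := G.chain_bound k hcw hmin t htk (fun n => {u | ρ u ≤ ρ (vv (s (min n (L - 1))))}) (L - 1)
    (by
      intro n u hu
      exact le_trans hu ((hv1 _ _ (hsn _ (hmin' _)) (hsn _ (hmin' _))).2 (hstep n)))
    (fun n => (hs2 _ (hmin' n)).2.2)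
    (by
      intro n S h1 h2
      refine hlink (vv (s (min n (L - 1)))) (vv (s (min (n + 1) (L - 1)))) t
        ((hv1 _ _ (hsn _ (hmin' _)) (hsn _ (hmin' _))).2 (hstep n)) ?_ S h1 h2
      intro v hva hvb
      obtain ⟨i, hi, rfl⟩ := hv2 v
      rw [hv1 _ _ (hsn _ (hmin' _)) hi] at hva
      rw [hv1 _ _ hi (hsn _ (hmin' _))] at hvb
      exact hs3 i ((hsm' 0 _ (by omega) (hmin' _)).trans hva)
        (hvb.trans (hsm' _ _ (by omega) (by omega))))
    (by
      intro n hn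
      refine ⟨vv (s (n + 1)), ?_, ?_⟩
      · have : min (n + 1) (L - 1) = n + 1 := by omega
        simp [this]
      · have : min n (L - 1) = n := by omega
        simp only [this, Set.mem_ofPred_eq]
        rw [hv1 _ _ (hsn _ (by omega)) (hsn _ (by omega))]
        have := hs1 n (by omega)
        omega)
  have := hL t htk
  omega

/-! ### Elementary bounds -/

theorem cutwidth_succ (G : Multigraph) (k : ℕ) (hcw : ¬ G.cutwidth ≤ k)
    (hmin : ∀ G', StrongImmersion G' G → ¬ G'.Isomorphic G → G'.cutwidth ≤ k) :
    ∃ ρ, G.Good (k + 1) ρ := by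
  by_cases hE : IsEmpty G.E
  · exfalso
    apply hcw
    rw [cutwidth_le_iff]
    refine ⟨fun v => (Fintype.equivFin G.V v : ℕ), ?_, ?_⟩
    · intro a b hab
      exact (Fintype.equivFin G.V).injective (Fin.ext hab)
    · intro v
      rw [delta_sum]
      simp
  · rw [not_isEmpty_iff] at hE
    obtain ⟨e⟩ := hE
    have h1 : (G.deleteEdges {e}).cutwidth ≤ k := by
      apply hmin
      · refine ⟨⟨⟨id, fun _ _ h => h, fun f => Walk.cons f.1 (Or.inl rfl) (Walk.nil _), ?_, ?_⟩, ?_⟩⟩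
        · intro f
          have h := G.loopless f.1
          change [(G.ends f.1).1, (G.ends f.1).2].Nodup
          simpa using h
        · intro f f' hne g hg hg'
          simp only [Walk.edges, List.mem_singleton] at hg hg'
          exact hne (Subtype.ext (hg.symm.trans hg'))
        · intro f x hx h1 h2
          change x ∈ [(G.ends f.1).1, (G.ends f.1).2] at hx
          simp only [List.mem_cons, List.not_mem_nil, or_false] at hx
          rcases hx with hx | hx
          · exact absurd hx h1
          · exact absurd hx h2
      · rintro ⟨f⟩
        have hinj : Function.Injective (fun v : G.E => (f.fe.symm v).1) :=
          Subtype.val_injective.comp f.fe.symm.injective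
        obtain ⟨v, hv⟩ := (Finite.injective_iff_surjective.1 hinj) e
        exact (f.fe.symm v).2 hv
    obtain ⟨ρ, hρ, h⟩ := (cutwidth_le_iff _ _).1 h1
    refine ⟨ρ, hρ, fun v => ?_⟩
    have h2 := h v
    have h3 : G.delta {u | ρ u ≤ ρ v} ≤ (G.deleteEdges {e}).delta {u | ρ u ≤ ρ v} + 1 := by
      have : {f | G.cross f {u | ρ u ≤ ρ v}} ⊆
          insert e (Subtype.val '' {f : {f : G.E // f ∉ ({e} : Set G.E)} |
            G.cross f.1 {u | ρ u ≤ ρ v}}) := by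
        intro f hf
        by_cases hfe : f = e
        · exact Or.inl hfe
        · exact Or.inr ⟨⟨f, hfe⟩, hf, rfl⟩
      refine (Set.ncard_le_ncard this (Set.toFinite _)).trans ?_
      refine (Set.ncard_insert_le _ _).trans ?_
      exact Nat.add_le_add_right (Set.ncard_image_le (Set.toFinite _)) 1
    omega

theorem degree_le (G : Multigraph) (k : ℕ) (ρ : G.V → ℕ) (h : G.Good k ρ) (v : G.V) :
    G.degree v ≤ 2 * k := by
  have h1 := h.2 v
  have h2 : G.delta {u | ρ u < ρ v} ≤ k := h.down _ (fun a b hab hb => lt_of_le_of_lt hab hb)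
  have h3 : G.degree v ≤ G.delta {u | ρ u ≤ ρ v} + G.delta {u | ρ u < ρ v} := by
    refine le_trans (Set.ncard_le_ncard ?_ (Set.toFinite _)) (Set.ncard_union_le _ _)
    intro e he
    have hl : ρ (G.ends e).1 ≠ ρ (G.ends e).2 := fun hh => G.loopless e (h.1 hh)
    simp only [Set.mem_union, Set.mem_ofPred_eq] at he ⊢
    rcases he with he | he <;> subst he <;> omega
  omega

theorem card_E_le (G : Multigraph) (k : ℕ) (ρ : G.V → ℕ) (h : G.Good k ρ) :
    Nat.card G.E ≤ k * Nat.card G.V := by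
  rw [Nat.card_eq_fintype_card, Nat.card_eq_fintype_card]
  have := Finset.card_le_mul_card_image_of_maps_to (s := (Finset.univ : Finset G.E))
    (t := (Finset.univ : Finset G.V))
    (f := fun e => if ρ (G.ends e).1 ≤ ρ (G.ends e).2 then (G.ends e).2 else (G.ends e).1)
    (fun _ _ => Finset.mem_univ _) k (by
      intro v _
      have h2 : G.delta {u | ρ u < ρ v} ≤ k := h.down _ (fun a b hab hb => lt_of_le_of_lt hab hb)
      refine le_trans ?_ h2
      rw [← Set.ncard_coe_finset]
      apply Set.ncard_le_ncard _ (Set.toFinite _)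
      intro e he
      have hl : ρ (G.ends e).1 ≠ ρ (G.ends e).2 := fun hh => G.loopless e (h.1 hh)
      simp only [Finset.coe_filter, Finset.mem_univ, true_and, Set.mem_ofPred_eq] at he ⊢
      split_ifs at he with hh <;> subst he <;> omega)
  simpa using this

/-! ### Arithmetic -/

theorem arith (k : ℕ) (hk : 1 ≤ k) (ℓ : ℕ) (hℓ : ℓ = (2 * k + 3) * (2 * k + 6)) :
    ((mm k) ^ (k + 1) * ((mm k) ^ (k + 1) * (k + 1) ^ (mm k)) + 2) ^ 2 ≤
      ℓ ^ (2 * (k + 1)) * (k + 2) ^ (2 * ℓ) + 2 := by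
  set m := mm k with hm
  have hm' : m = (k + 2) * (2 * k + 3) + 4 := rfl
  set I := m ^ (k + 1) * (m ^ (k + 1) * (k + 1) ^ m) with hI
  have hmpos : 1 ≤ m := by omega
  have hI1 : 1 ≤ I := Nat.one_le_iff_ne_zero.2 (by positivity)
  have h1 : (I + 2) ^ 2 ≤ 9 * I ^ 2 := by nlinarith
  have hml : m ≤ ℓ := by rw [hm', hℓ]; nlinarith
  have hm3 : m ≤ (k + 2) ^ 3 := by rw [hm']; nlinarith [Nat.zero_le (k ^ 3), mul_self_nonneg k]
  have h9 : 9 ≤ (k + 2) ^ 2 := by nlinarith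
  have hI2 : I ^ 2 = m ^ (2 * (k + 1)) * (m ^ (2 * (k + 1)) * (k + 1) ^ (2 * m)) := by
    rw [hI]; ring
  have hexp : 2 + (3 * (2 * (k + 1)) + 2 * m) ≤ 2 * ℓ := by rw [hm', hℓ]; nlinarith
  calc (I + 2) ^ 2 ≤ 9 * I ^ 2 := h1
    _ = m ^ (2 * (k + 1)) * (9 * (m ^ (2 * (k + 1)) * (k + 1) ^ (2 * m))) := by rw [hI2]; ring
    _ ≤ ℓ ^ (2 * (k + 1)) * ((k + 2) ^ 2 * (((k + 2) ^ 3) ^ (2 * (k + 1)) * (k + 2) ^ (2 * m))) := by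
        gcongr
        omega
    _ = ℓ ^ (2 * (k + 1)) * (k + 2) ^ (2 + (3 * (2 * (k + 1)) + 2 * m)) := by
        rw [pow_add, pow_add, ← pow_mul]
    _ ≤ ℓ ^ (2 * (k + 1)) * (k + 2) ^ (2 * ℓ) := by
        gcongr
        omega
    _ ≤ _ := Nat.le_add_right _ _

end Multigraph

open Multigraph in
/-- every minimal strong-immersion obstruction for cutwidth at most `k`
has at most `N^(k+1)` vertices and at most `(k+1)·N^(k+1)` edges; in particular every
vertex has degree at most `2(k+1)`. -/
theorem cutwidth_obstruction_size_bound
    (k : ℕ) (hk : 1 ≤ k) (ℓ : ℕ) (hℓ : ℓ = (2 * k + 3) * (2 * k + 6))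
    (N : ℝ)
    (hN : N = (2 : ℝ) ^ (2 * (((k : ℝ) + 1) * Real.logb 2 (ℓ : ℝ)
                + (ℓ : ℝ) * Real.logb 2 ((k : ℝ) + 2))) + 2)
    (G : Multigraph)
    (hG : G ∈ obstructions StrongImmersion (cutwidthClass k)) :
    (Nat.card G.V : ℝ) ≤ N ^ (k + 1) ∧
    (Nat.card G.E : ℝ) ≤ ((k : ℝ) + 1) * N ^ (k + 1) ∧
    (∀ v : G.V, G.degree v ≤ 2 * (k + 1)) := by
  obtain ⟨hcw, hmin⟩ := hG
  change ¬ G.cutwidth ≤ k at hcw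
  change ∀ G', StrongImmersion G' G → ¬ G'.Isomorphic G → G'.cutwidth ≤ k at hmin
  obtain ⟨ρ, hρ⟩ := G.cutwidth_succ k hcw hmin
  set L := (mm k) ^ (k + 1) * ((mm k) ^ (k + 1) * (k + 1) ^ (mm k)) + 2 with hL
  have hm1 : 1 ≤ mm k := by unfold mm; omega
  have hV := G.card_V_lt k hcw hmin ⟨ρ, hρ⟩ L (by
    intro t ht
    rw [card_itf]
    have h1 : mm k ^ t ≤ mm k ^ (k + 1) := Nat.pow_le_pow_right hm1 ht
    rw [hL]
    gcongr)
  have hE := G.card_E_le (k + 1) ρ hρ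
  have hNN : N = ((ℓ ^ (2 * (k + 1)) * (k + 2) ^ (2 * ℓ) + 2 : ℕ) : ℝ) := by
    have hl : (0 : ℝ) < ℓ := by
      have : 0 < ℓ := by rw [hℓ]; positivity
      exact_mod_cast this
    have hk2 : (0 : ℝ) < (k : ℝ) + 2 := by positivity
    rw [hN]
    push_cast
    congr 1
    rw [show 2 * (((k : ℝ) + 1) * Real.logb 2 (ℓ : ℝ) + (ℓ : ℝ) * Real.logb 2 ((k : ℝ) + 2)) =
      Real.logb 2 (ℓ : ℝ) * ((2 * (k + 1) : ℕ) : ℝ) +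
        Real.logb 2 ((k : ℝ) + 2) * ((2 * ℓ : ℕ) : ℝ) by push_cast; ring]
    rw [Real.rpow_add (by norm_num), Real.rpow_mul (by norm_num), Real.rpow_mul (by norm_num),
      Real.rpow_logb (by norm_num) (by norm_num) hl, Real.rpow_logb (by norm_num) (by norm_num) hk2,
      Real.rpow_natCast, Real.rpow_natCast]
  have hLN : L ^ 2 ≤ ℓ ^ (2 * (k + 1)) * (k + 2) ^ (2 * ℓ) + 2 := arith k hk ℓ hℓ
  set M := ℓ ^ (2 * (k + 1)) * (k + 2) ^ (2 * ℓ) + 2 with hM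
  have hVM : Nat.card G.V ≤ M ^ (k + 1) := by
    calc Nat.card G.V ≤ L ^ (k + 2) := hV.le
      _ ≤ L ^ (2 * (k + 1)) := Nat.pow_le_pow_right (by omega) (by omega)
      _ = (L ^ 2) ^ (k + 1) := by rw [pow_mul]
      _ ≤ M ^ (k + 1) := Nat.pow_le_pow_left hLN _
  refine ⟨?_, ?_, G.degree_le (k + 1) ρ hρ⟩
  · rw [hNN]
    exact_mod_cast hVM
  · rw [hNN]
    have : Nat.card G.E ≤ (k + 1) * M ^ (k + 1) := hE.trans (Nat.mul_le_mul_left _ hVM)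
    exact_mod_cast this
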